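/- arXiv:1512.01160 — 2 statements merged into one kernel-verified Lean document; each statement's English description precedes it below -/
import Mathlib

section
/- Let 0 ≤ δ < 1 and M ≥ 1. Let V : ℝ → Matrix(M, M, ℂ) be continuous and 2π-periodic with V(x) Hermitian and positive semidefinite for every x. Let P act componentwise by (Pψ)(x) = ψ(x) − (1/(2π)) ∫_0^{2π} ψ(t) dt. Suppose φ_1, …, φ_N : ℝ → ℂ^M are C² functions, 2π-periodic, with ∫_0^{2π} φ_n(t) dt = 0, orthonormal in L²((0, 2π); ℂ^M), and for each n there is μ_n > 0 such that −φ_n''(x) − δ φ_n(x) − (P(V · (Pφ_n)))(x) = −μ_n φ_n(x) for all x. Then ∑_{n=1}^N μ_n ≤ (2/(3√3)) · K₂(δ) · ∫_0^{2π} Tr[V(x)^{3/2}] dx. -/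
open Real MeasureTheory ComplexOrder

/-- The sharp constant `K₂(β) = sup_{λ>0} (√λ/π) · ∑_{k ∈ ℤ, k ≠ 0} 1/(k² − β + λ)`. -/
noncomputable def K2 (β : ℝ) : ℝ :=
  ⨆ l : Set.Ioi (0 : ℝ),
    Real.sqrt l / π * ∑' k : {k : ℤ // k ≠ 0}, 1 / ((k.1 : ℝ) ^ 2 - β + l)

/-- The projection removing the mean value over `(0, 2π)`, acting componentwise on
vector-valued functions. -/
noncomputable def projP {M : ℕ} (ψ : ℝ → Fin M → ℂ) (x : ℝ) : Fin M → ℂ :=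
  ψ x - (1 / (2 * π)) • ∫ t in (0:ℝ)..(2 * π), ψ t

open scoped Matrix.Norms.L2Operator in
lemma tr_cont {M : ℕ} (V : ℝ → Matrix (Fin M) (Fin M) ℂ) (hVc : Continuous V)
    (hV : ∀ x, (V x).PosSemidef) :
    Continuous (fun x => ∑ i, (hV x).1.eigenvalues i ^ (3 / 2 : ℝ)) := by
  have key : Continuous (fun x => cfc (fun t : ℝ => t ^ (3/2:ℝ)) (V x)) := by
    exact Continuous.cfc_of_mem_nhdsSet (s := Set.univ) (f := fun t : ℝ => t ^ (3/2:ℝ)) (a := V)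
      Filter.univ_mem hVc (fun x => (hV x).1.isSelfAdjoint)
      (Real.continuous_rpow_const (by norm_num)).continuousOn
  have : (fun x => ∑ i, (hV x).1.eigenvalues i ^ (3 / 2 : ℝ)) =
      fun x => (Matrix.trace (cfc (fun t : ℝ => t ^ (3/2:ℝ)) (V x))).re := by
    ext x
    rw [(hV x).1.cfc_eq, Matrix.IsHermitian.cfc, Unitary.conjStarAlgAut_apply,
      Matrix.trace_mul_cycle]
    simp [Matrix.trace]
  rw [this]
  exact Complex.continuous_re.comp (Continuous.matrix_trace key)

lemma k2_term {δ l : ℝ} (hδ1 : δ < 1) (hl : 0 < l) (k : {k : ℤ // k ≠ 0}) :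
    0 < (k.1:ℝ)^2 - δ + l := by
  have : (1:ℝ) ≤ (k.1:ℝ)^2 := by
    have h : (1:ℤ) ≤ k.1^2 := by
      have := k.2
      have := sq_pos_of_ne_zero this
      omega
    exact_mod_cast h
  linarith

lemma k2_tele {s : ℝ} (hs : 0 < s) :
    HasSum (fun n : ℕ => 1 / ((n + s) * (n + 1 + s))) (1 / s) := by
  rw [hasSum_iff_tendsto_nat_of_nonneg]
  · have : ∀ n : ℕ, ∑ i ∈ Finset.range n, 1 / (((i:ℝ) + s) * (i + 1 + s)) = 1 / s - 1 / (n + s) := by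
      intro n
      induction n with
      | zero => simp
      | succ n ih =>
        rw [Finset.sum_range_succ, ih]
        push_cast
        have : (0:ℝ) < n + s := by positivity
        have : (0:ℝ) < n + 1 + s := by positivity
        field_simp
        ring
    simp_rw [this]
    have h : Filter.Tendsto (fun n : ℕ => 1 / ((n:ℝ) + s)) Filter.atTop (nhds 0) := by
      simp_rw [one_div]
      exact (Filter.tendsto_atTop_add_const_right _ s tendsto_natCast_atTop_atTop).inv_tendsto_atTop
    simpa using h.const_sub (1/s)
  · intro n; positivity

lemma k2_nat {s : ℝ} (hs : 0 < s) (n : ℕ) :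
   1 / (((n:ℝ)+1)^2 + s^2) ≤ 2 * (1 / ((n + s) * (n + 1 + s))) := by
  rw [mul_one_div, div_le_div_iff₀ (by positivity) (by positivity)]
  nlinarith [sq_nonneg ((n:ℝ) + 1 - s), (Nat.cast_nonneg n : (0:ℝ) ≤ n)]

/-- sum over nonzero integers -/
lemma k2_int {s : ℝ} (hs : 0 < s) :
    Summable (fun k : {k : ℤ // k ≠ 0} => 1 / ((k.1:ℝ)^2 + s^2)) ∧
    ∑' k : {k : ℤ // k ≠ 0}, 1 / ((k.1:ℝ)^2 + s^2) ≤ 4 / s := by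
  set g : ℤ → ℝ := fun k => if k = 0 then 0 else 1 / ((k:ℝ)^2 + s^2) with hg
  have hn : Summable (fun n : ℕ => 1 / (((n:ℝ)+1)^2 + s^2)) :=
    Summable.of_nonneg_of_le (fun n => by positivity) (k2_nat hs) ((k2_tele hs).summable.mul_left 2)
  have hb : ∑' n : ℕ, 1 / (((n:ℝ)+1)^2 + s^2) ≤ 2 * (1 / s) := by
    rw [← (k2_tele hs).tsum_eq, ← tsum_mul_left]
    exact hn.tsum_le_tsum (k2_nat hs) ((k2_tele hs).summable.mul_left 2)
  have h1 : HasSum (fun n : ℕ => g (n+1)) (∑' n : ℕ, 1 / (((n:ℝ)+1)^2 + s^2)) := by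
    convert hn.hasSum using 2 with n
    have : (n:ℤ) + 1 ≠ 0 := by omega
    simp [hg, this]
  have h2 : HasSum (fun n : ℕ => g (-(n+1))) (∑' n : ℕ, 1 / (((n:ℝ)+1)^2 + s^2)) := by
    convert hn.hasSum using 2 with n
    have : -((n:ℤ) + 1) ≠ 0 := by omega
    simp only [hg, this, if_false]
    push_cast
    ring
  have h3 := HasSum.of_add_one_of_neg_add_one h1 h2
  have h4 : HasSum (fun k : {k : ℤ // k ≠ 0} => 1 / ((k.1:ℝ)^2 + s^2)) (∑' n : ℕ, 1 / (((n:ℝ)+1)^2 + s^2) + g 0 + ∑' n : ℕ, 1 / (((n:ℝ)+1)^2 + s^2)) := by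
    rw [← hasSum_subtype_iff_of_support_subset (s := {k : ℤ | k ≠ 0})] at h3
    · have e : (fun k : {k : ℤ // k ≠ 0} => 1 / ((k.1:ℝ)^2 + s^2)) = g ∘ (fun k => k.1) := by
        funext k
        simp only [Function.comp, hg]
        rw [if_neg k.2]
      rw [e]
      exact h3
    · intro k hk
      simp only [hg, Function.mem_support] at hk
      intro h
      simp [h] at hk
  refine ⟨h4.summable, ?_⟩
  rw [h4.tsum_eq]
  have : g 0 = 0 := by simp [hg]
  rw [this]
  have : 4 / s = 2 * (1/s) + 2 * (1/s) := by ring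
  linarith

lemma k2_cmp {δ l : ℝ} (hδ0 : 0 ≤ δ) (hδ1 : δ < 1) (hl : 0 < l) (k : {k : ℤ // k ≠ 0}) :
    1 / ((k.1:ℝ)^2 - δ + l) ≤ (1 / (1-δ)) * (1 / ((k.1:ℝ)^2 + (√(l/(1-δ)))^2)) := by
  have hd : 0 < 1 - δ := by linarith
  rw [Real.sq_sqrt (by positivity), mul_comm, one_div_mul_one_div]
  apply one_div_le_one_div_of_le
  · positivity
  · have : (1:ℝ) ≤ (k.1:ℝ)^2 := by
      have h : (1:ℤ) ≤ k.1^2 := by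
        have := k.2
        have := sq_pos_of_ne_zero this
        omega
      exact_mod_cast h
    have e : ((k.1:ℝ)^2 + l/(1-δ)) * (1-δ) = (1-δ) * (k.1:ℝ)^2 + l := by field_simp
    nlinarith

lemma k2_summable {δ l : ℝ} (hδ0 : 0 ≤ δ) (hδ1 : δ < 1) (hl : 0 < l) :
    Summable (fun k : {k : ℤ // k ≠ 0} => 1 / ((k.1:ℝ)^2 - δ + l)) := by
  have hd : 0 < 1 - δ := by linarith
  have hs : 0 < √(l/(1-δ)) := by positivity
  exact Summable.of_nonneg_of_le (fun k => (one_div_pos.2 (k2_term hδ1 hl k)).le)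
    (k2_cmp hδ0 hδ1 hl) ((k2_int hs).1.mul_left _)

lemma k2_bdd {δ : ℝ} (hδ0 : 0 ≤ δ) (hδ1 : δ < 1) :
    BddAbove (Set.range fun l : Set.Ioi (0 : ℝ) =>
      Real.sqrt l / π * ∑' k : {k : ℤ // k ≠ 0}, 1 / ((k.1 : ℝ) ^ 2 - δ + l)) := by
  have hd : 0 < 1 - δ := by linarith
  refine ⟨1 / π * (1 / (1-δ) * (4 * √(1-δ))), ?_⟩
  rintro _ ⟨⟨l, hl⟩, rfl⟩
  have hl : 0 < l := hl
  have hs : 0 < √(l/(1-δ)) := by positivity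
  have : ∑' k : {k : ℤ // k ≠ 0}, 1 / ((k.1 : ℝ) ^ 2 - δ + l) ≤ (1 / (1-δ)) * (4 / √(l/(1-δ))) := by
    refine ((k2_summable hδ0 hδ1 hl).tsum_le_tsum (k2_cmp hδ0 hδ1 hl) ((k2_int hs).1.mul_left _)).trans ?_
    rw [tsum_mul_left]
    exact mul_le_mul_of_nonneg_left (k2_int hs).2 (by positivity)
  refine (mul_le_mul_of_nonneg_left this (by positivity)).trans_eq ?_
  rw [Real.sqrt_div hl.le]
  have : 0 < √l := by positivity
  field_simp

lemma k2_le {δ l : ℝ} (hδ0 : 0 ≤ δ) (hδ1 : δ < 1) (hl : 0 < l) :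
    ∑' k : {k : ℤ // k ≠ 0}, 1 / ((k.1 : ℝ) ^ 2 - δ + l) ≤ π * K2 δ / √l := by
  have := le_ciSup (k2_bdd hδ0 hδ1) ⟨l, hl⟩
  have h2 : 0 < √l := by positivity
  rw [le_div_iff₀ h2]
  change √l / π * _ ≤ K2 δ at this
  rw [div_mul_eq_mul_div, div_le_iff₀ pi_pos] at this
  linarith

lemma k2_pos {δ : ℝ} (hδ0 : 0 ≤ δ) (hδ1 : δ < 1) : 0 < K2 δ := by
  have h := k2_le hδ0 hδ1 one_pos
  have h2 : 0 < ∑' k : {k : ℤ // k ≠ 0}, 1 / ((k.1 : ℝ) ^ 2 - δ + 1) :=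
    (k2_summable hδ0 hδ1 one_pos).tsum_pos (fun k => (one_div_pos.2 (k2_term hδ1 one_pos k)).le)
      ⟨1, one_ne_zero⟩ (one_div_pos.2 (k2_term hδ1 one_pos _))
  have := h2.trans_le h
  rw [Real.sqrt_one, div_one] at this
  exact pos_of_mul_pos_right this pi_pos.le

lemma young {K u v : ℝ} (hK : 0 < K) (hu : 0 ≤ u) (hv : 0 ≤ v) :
    v * u ≤ (2 / (3 * √3)) * K * v ^ (3/2:ℝ) + u^3 / K^2 := by
  obtain ⟨t, ht, rfl⟩ : ∃ t : ℝ, 0 ≤ t ∧ v = 3 * t^2 :=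
    ⟨√(v/3), by positivity, by rw [Real.sq_sqrt (by positivity)]; ring⟩
  obtain ⟨w, hw, rfl⟩ : ∃ w : ℝ, 0 ≤ w ∧ u = K * w := ⟨u / K, by positivity, by field_simp⟩
  have e : (3 * t^2) ^ (3/2:ℝ) = 3 * √3 * t^3 := by
    rw [show (3/2:ℝ) = 1/2 * (3:ℕ) by norm_num, Real.rpow_mul (by positivity), Real.rpow_natCast,
      ← Real.sqrt_eq_rpow, Real.sqrt_mul (by norm_num), Real.sqrt_sq ht, mul_pow]
    rw [show (√3)^3 = (√3)^2 * √3 by ring, Real.sq_sqrt (by norm_num)]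
  rw [e]
  have e2 : (2 / (3 * √3)) * K * (3 * √3 * t^3) + (K*w)^3/K^2 = K * (2 * t^3 + w^3) := by
    field_simp
  rw [e2]
  have : 0 ≤ (t-w)^2 * (2*t+w) := by positivity
  nlinarith

lemma two_pi_pos' : (0:ℝ) < 2 * π := by positivity

lemma four_pt (f : ℝ → ℂ) (hf : Continuous f) (hper : Function.Periodic f (2 * π))
    (hs : Summable (fun k => ‖fourierCoeffOn two_pi_pos' f k‖)) (x : ℝ) :
    ‖f x‖ ≤ ∑' k, ‖fourierCoeffOn two_pi_pos' f k‖ := by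
  have : Fact ((0:ℝ) < 2 * π) := ⟨two_pi_pos'⟩
  let F : C(AddCircle (2*π), ℂ) := ⟨hper.lift, continuous_coinduced_dom.mpr (by exact hf)⟩
  have e : ∀ k, fourierCoeff F k = fourierCoeffOn two_pi_pos' f k := by
    intro k
    rw [fourierCoeff_eq_intervalIntegral _ _ 0, fourierCoeffOn_eq_integral]
    simp only [fourier_coe_apply, sub_zero, zero_add]
    rfl
  have hs' : Summable (fourierCoeff F) := by
    apply Summable.of_norm
    simpa only [e] using hs
  have h := has_pointwise_sum_fourier_series_of_summable hs' (x : AddCircle (2*π))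
  have hF : F (x : AddCircle (2*π)) = f x := rfl
  rw [hF] at h
  rw [← h.tsum_eq]
  refine (norm_tsum_le_tsum_norm ?_).trans_eq ?_
  · simp only [norm_smul, e]
    refine hs.congr fun k => ?_
    rw [show ‖(fourier k) (x : AddCircle (2*π))‖ = 1 from Circle.norm_coe _, mul_one]
  · congr 1; ext k
    rw [norm_smul, e, show ‖(fourier k) (x : AddCircle (2*π))‖ = 1 from Circle.norm_coe _, mul_one]

lemma four_deriv (f : ℝ → ℂ) (hf : ContDiff ℝ 2 f) (hper : Function.Periodic f (2 * π)) (k : ℤ) :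
    ‖fourierCoeffOn two_pi_pos' (deriv f) k‖ ^ 2 = (k:ℝ)^2 * ‖fourierCoeffOn two_pi_pos' f k‖^2 := by
  have hd : ∀ x, HasDerivAt f (deriv f x) x := fun x =>
    (hf.differentiable (by norm_num)).differentiableAt.hasDerivAt
  have hc : Continuous (deriv f) := hf.continuous_deriv (by norm_num)
  have hp : f (2*π) = f 0 := by simpa using hper 0
  by_cases hk : k = 0
  · subst hk
    rw [fourierCoeffOn_eq_integral]
    have : ∫ x in (0:ℝ)..(2*π), deriv f x = 0 := by
      rw [intervalIntegral.integral_eq_sub_of_hasDerivAt (fun x _ => hd x) (hc.intervalIntegrable _ _),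
        hp, sub_self]
    simp [this]
  · have h := fourierCoeffOn_of_hasDerivAt two_pi_pos' hk (fun x _ => hd x) (hc.intervalIntegrable _ _)
    have hk' : (k:ℂ) ≠ 0 := by exact_mod_cast hk
    have hpi : (π:ℂ) ≠ 0 := by exact_mod_cast pi_ne_zero
    have h2 : fourierCoeffOn two_pi_pos' (deriv f) k = Complex.I * k * fourierCoeffOn two_pi_pos' f k := by
      rw [h, hp]
      push_cast
      field_simp
      simp
      ring
    rw [h2, norm_mul, norm_mul, mul_pow, mul_pow]
    simp

lemma parseval (f : ℝ → ℂ) (hf : Continuous f) :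
    HasSum (fun k => ‖fourierCoeffOn two_pi_pos' f k‖ ^ 2) ((2*π)⁻¹ * ∫ x in (0:ℝ)..(2*π), ‖f x‖^2) := by
  have h : MemLp f 2 (volume.restrict (Set.Ioc 0 (2*π))) := by
    obtain ⟨C, hC⟩ := isCompact_Icc.exists_bound_of_continuousOn (s := Set.Icc 0 (2*π)) hf.continuousOn
    refine MemLp.of_bound hf.aestronglyMeasurable C ?_
    filter_upwards [ae_restrict_mem measurableSet_Ioc] with x hx
    exact hC x (Set.Ioc_subset_Icc_self hx)
  simpa using hasSum_sq_fourierCoeffOn two_pi_pos' h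

lemma ibp (f : ℝ → ℂ) (hf : ContDiff ℝ 2 f) (hper : Function.Periodic f (2 * π)) :
    ∫ x in (0:ℝ)..(2*π), deriv (deriv f) x * (starRingEnd ℂ) (f x) =
      - ((∫ x in (0:ℝ)..(2*π), ‖deriv f x‖^2 : ℝ) : ℂ) := by
  have hd : ∀ x, HasDerivAt f (deriv f x) x := fun x =>
    (hf.differentiable (by norm_num)).differentiableAt.hasDerivAt
  have hf1 : ContDiff ℝ 1 (deriv f) := by
    have : ContDiff ℝ (1+1) f := by norm_num; exact hf
    exact ((contDiff_succ_iff_deriv).1 this).2.2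
  have hd2 : ∀ x, HasDerivAt (deriv f) (deriv (deriv f) x) x := fun x =>
    (hf1.differentiable (by norm_num)).differentiableAt.hasDerivAt
  have hc : Continuous (deriv f) := hf.continuous_deriv (by norm_num)
  have hc2 : Continuous (deriv (deriv f)) := hf1.continuous_deriv (by norm_num)
  have hp : f (2*π) = f 0 := by simpa using hper 0
  have hp' : deriv f (2*π) = deriv f 0 := by
    have : deriv f (0 + 2*π) = deriv f 0 := by
      rw [← deriv_comp_add_const]
      congr 1
      ext x; exact hper x
    simpa using this
  have hcj : ∀ x, HasDerivAt (fun x => (starRingEnd ℂ) (f x)) ((starRingEnd ℂ) (deriv f x)) x :=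
    fun x => (hd x).star
  have := intervalIntegral.integral_mul_deriv_eq_deriv_mul (a := 0) (b := 2*π)
    (fun x _ => hcj x) (fun x _ => hd2 x)
    ((Complex.continuous_conj.comp hc).intervalIntegrable _ _) (hc2.intervalIntegrable _ _)
  simp only [mul_comm (deriv (deriv f) _)]
  rw [this, hp, hp', sub_self, zero_sub, ← intervalIntegral.integral_ofReal]
  congr 2
  ext x
  rw [Complex.conj_mul']
  push_cast
  rfl

lemma scalar_bound {δ l : ℝ} (hδ0 : 0 ≤ δ) (hδ1 : δ < 1) (hl : 0 < l)
    (f : ℝ → ℂ) (hf : ContDiff ℝ 2 f) (hper : Function.Periodic f (2 * π))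
    (hmean : ∫ x in (0:ℝ)..(2*π), f x = 0) (x : ℝ) :
    ‖f x‖^2 ≤ K2 δ / (2 * √l) *
      (∫ y in (0:ℝ)..(2*π), (-deriv (deriv f) y + ((l - δ : ℝ):ℂ) * f y) * (starRingEnd ℂ) (f y)).re := by
  have hf1 : ContDiff ℝ 1 (deriv f) := by
    have : ContDiff ℝ (1+1) f := by norm_num; exact hf
    exact ((contDiff_succ_iff_deriv).1 this).2.2
  have hc : Continuous (deriv f) := hf.continuous_deriv (by norm_num)
  have hc2 : Continuous (deriv (deriv f)) := hf1.continuous_deriv (by norm_num)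
  have hc0 := hf.continuous
  have hcc : Continuous fun y => (starRingEnd ℂ) (f y) := Complex.continuous_conj.comp hc0
  set D := ∫ x in (0:ℝ)..(2*π), ‖deriv f x‖^2
  set B := ∫ x in (0:ℝ)..(2*π), ‖f x‖^2
  have hQ : (∫ y in (0:ℝ)..(2*π), (-deriv (deriv f) y + ((l - δ : ℝ):ℂ) * f y) * (starRingEnd ℂ) (f y)).re
      = D + (l - δ) * B := by
    have e : ∀ y, (-deriv (deriv f) y + ((l - δ : ℝ):ℂ) * f y) * (starRingEnd ℂ) (f y) =
       -(deriv (deriv f) y * (starRingEnd ℂ) (f y)) + ((l - δ : ℝ):ℂ) * ((‖f y‖^2 : ℝ) : ℂ) := by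
      intro y
      have := Complex.mul_conj' (f y)
      push_cast
      rw [← this]
      ring
    simp_rw [e]
    rw [intervalIntegral.integral_add, intervalIntegral.integral_neg, ibp f hf hper, neg_neg,
      intervalIntegral.integral_const_mul, intervalIntegral.integral_ofReal, ← Complex.ofReal_mul,
      ← Complex.ofReal_add, Complex.ofReal_re]
    · exact ((hc2.mul hcc).neg).intervalIntegrable _ _
    · apply Continuous.intervalIntegrable
      fun_prop
  rw [hQ]
  set c : ℤ → ℂ := fourierCoeffOn two_pi_pos' f with hcdef
  have hc00 : c 0 = 0 := by
    rw [hcdef, fourierCoeffOn_eq_integral]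
    simp [hmean]
  have hB := parseval f hc0
  have hD := parseval _ hc
  simp_rw [four_deriv f hf hper] at hD
  have hW := hD.add (hB.mul_left (l-δ))
  have hW' : HasSum (fun k : {k : ℤ // k ≠ 0} => ((k.1:ℝ)^2 - δ + l) * ‖c k.1‖^2)
      ((2*π)⁻¹ * (D + (l - δ) * B)) := by
    rw [← hasSum_subtype_iff_of_support_subset (s := {k : ℤ | k ≠ 0})] at hW
    · have e1 : (fun k : {k : ℤ // k ≠ 0} => ((k.1:ℝ)^2 - δ + l) * ‖c k.1‖^2) =
          (fun b : ℤ => (b:ℝ) ^ 2 * ‖c b‖ ^ 2 + (l - δ) * ‖c b‖ ^ 2) ∘ (fun k => k.1) := by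
        funext k
        simp only [Function.comp]
        ring
      have e2 : (2*π)⁻¹ * (D + (l - δ) * B) = (2*π)⁻¹ * D + (l - δ) * ((2*π)⁻¹ * B) := by ring
      rw [e1, e2]
      exact hW
    · intro k hk
      simp only [Function.mem_support] at hk
      intro h
      have h : k = 0 := h
      subst h
      apply hk
      change _ * ‖c 0‖^2 + _ * (‖c 0‖^2) = 0
      simp [hc00]
  set S := ∑' k : {k : ℤ // k ≠ 0}, 1 / ((k.1 : ℝ) ^ 2 - δ + l) with hS
  set Q := (2*π)⁻¹ * (D + (l - δ) * B) with hQd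
  have hw := k2_term hδ1 hl
  have hS0 : 0 ≤ S := tsum_nonneg fun k => (one_div_pos.2 (hw k)).le
  have hQ0 : 0 ≤ Q := hW'.nonneg fun k => mul_nonneg (hw k).le (sq_nonneg _)
  have hfin : ∀ s : Finset {k : ℤ // k ≠ 0}, ∑ k ∈ s, ‖c k.1‖ ≤ √(S * Q) := by
    intro s
    apply Real.le_sqrt_of_sq_le
    refine (Finset.sum_sq_le_sum_mul_sum_of_sq_le_mul s (f := fun k => 1 / ((k.1 : ℝ) ^ 2 - δ + l))
      (g := fun k => ((k.1:ℝ)^2 - δ + l) * ‖c k.1‖^2) (fun k _ => (one_div_pos.2 (hw k)).le)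
      (fun k _ => mul_nonneg (hw k).le (sq_nonneg _)) ?_).trans ?_
    · intro k _
      have := (hw k).ne'
      apply le_of_eq
      field_simp
    · apply mul_le_mul
      · exact (k2_summable hδ0 hδ1 hl).sum_le_tsum s (fun k _ => (one_div_pos.2 (hw k)).le)
      · exact sum_le_hasSum s (fun k _ => mul_nonneg (hw k).le (sq_nonneg _)) hW'
      · exact Finset.sum_nonneg (fun k _ => mul_nonneg (hw k).le (sq_nonneg _))
      · exact hS0
  have hsum : Summable (fun k : {k : ℤ // k ≠ 0} => ‖c k.1‖) :=
    summable_of_sum_le (fun k => norm_nonneg _) hfin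
  have hle : ∑' k : {k : ℤ // k ≠ 0}, ‖c k.1‖ ≤ √(S * Q) := hsum.tsum_le_of_sum_le hfin
  have hfull : HasSum (fun k : ℤ => ‖c k‖) (∑' k : {k : ℤ // k ≠ 0}, ‖c k.1‖) := by
    rw [← hasSum_subtype_iff_of_support_subset (s := {k : ℤ | k ≠ 0})]
    · exact hsum.hasSum
    · intro k hk h
      have h : k = 0 := h
      subst h
      simp [hc00] at hk
  have h1 := four_pt f hc0 hper hfull.summable x
  rw [hfull.tsum_eq] at h1
  have h2 : ‖f x‖^2 ≤ S * Q := by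
    have := pow_le_pow_left₀ (norm_nonneg _) (h1.trans hle) 2
    rwa [Real.sq_sqrt (mul_nonneg hS0 hQ0)] at this
  refine h2.trans ((mul_le_mul_of_nonneg_right (k2_le hδ0 hδ1 hl) hQ0).trans_eq ?_)
  rw [hQd]
  have : 0 < √l := by positivity
  field_simp

lemma diag {M : ℕ} (A : Matrix (Fin M) (Fin M) ℂ) (hA : A.IsHermitian) :
    ∃ e : Fin M → Fin M → ℂ,
      (∀ p q : Fin M → ℂ, ∑ i, (starRingEnd ℂ) (∑ j, (starRingEnd ℂ) (e i j) * p j) *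
          (∑ j, (starRingEnd ℂ) (e i j) * q j) = ∑ j, (starRingEnd ℂ) (p j) * q j) ∧
      (∀ p : Fin M → ℂ, ∑ j, A.mulVec p j * (starRingEnd ℂ) (p j) =
        ∑ i, (hA.eigenvalues i : ℂ) * ((‖∑ j, (starRingEnd ℂ) (e i j) * p j‖^2 : ℝ) : ℂ)) ∧
      (∀ i, ∀ p : Fin M → ℂ, ‖∑ j, (starRingEnd ℂ) (e i j) * p j‖^2 ≤ ∑ j, ‖p j‖^2) := by
  have h1 : ∀ p q : Fin M → ℂ, ∑ i, (starRingEnd ℂ) (∑ j, (starRingEnd ℂ) (hA.eigenvectorBasis i j) * p j) *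
          (∑ j, (starRingEnd ℂ) (hA.eigenvectorBasis i j) * q j) = ∑ j, (starRingEnd ℂ) (p j) * q j := by
    intro p q
    have := hA.eigenvectorBasis.sum_inner_mul_inner (WithLp.toLp 2 p) (WithLp.toLp 2 q)
    simp only [PiLp.inner_apply, RCLike.inner_apply] at this
    simp only [map_sum, map_mul, Complex.conj_conj]
    simpa only [mul_comm] using this
  refine ⟨fun i j => hA.eigenvectorBasis i j, h1, ?_, ?_⟩
  · intro p
    have h2 : ∀ i, ∑ j, (starRingEnd ℂ) (hA.eigenvectorBasis i j) * A.mulVec p j =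
        hA.eigenvalues i * ∑ j, (starRingEnd ℂ) (hA.eigenvectorBasis i j) * p j := by
      intro i
      change star ⇑(hA.eigenvectorBasis i) ⬝ᵥ A.mulVec p = _ * (star ⇑(hA.eigenvectorBasis i) ⬝ᵥ p)
      rw [Matrix.dotProduct_mulVec]
      have : Matrix.vecMul (star ⇑(hA.eigenvectorBasis i)) A = 
          (hA.eigenvalues i : ℂ) • star ⇑(hA.eigenvectorBasis i) := by
        have h := congrArg star (hA.mulVec_eigenvectorBasis i)
        rw [Matrix.star_mulVec, hA.eq] at h
        rw [h]
        ext j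
        simp
      rw [this, smul_dotProduct, smul_eq_mul]
    have := h1 p (A.mulVec p)
    simp only [mul_comm (A.mulVec p _)]
    rw [← this]
    refine Finset.sum_congr rfl fun i _ => ?_
    rw [h2 i, mul_left_comm, Complex.conj_mul']
    push_cast
    rfl
  · intro i p
    have := h1 p p
    simp only [Complex.conj_mul'] at this
    have h : ∑ i, ‖∑ j, (starRingEnd ℂ) (hA.eigenvectorBasis i j) * p j‖^2 = ∑ j, ‖p j‖^2 := by
      exact_mod_cast this
    rw [← h]
    exact Finset.single_le_sum (f := fun i => ‖∑ j, (starRingEnd ℂ) (hA.eigenvectorBasis i j) * p j‖^2)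
      (fun i _ => sq_nonneg _) (Finset.mem_univ i)

lemma vec_bound {δ l : ℝ} (hδ0 : 0 ≤ δ) (hδ1 : δ < 1) (hl : 0 < l)
    {M N : ℕ} (φ : Fin N → ℝ → Fin M → ℂ) (hφ : ∀ n, ContDiff ℝ 2 (φ n))
    (hper : ∀ n, Function.Periodic (φ n) (2 * π))
    (hmean : ∀ n, (∫ t in (0:ℝ)..(2 * π), φ n t) = 0)
    (a : Fin N → Fin N → ℂ)
    (ha : ∀ n m, ∫ y in (0:ℝ)..(2*π), ∑ j, (-deriv (deriv (φ n)) y j + ((l - δ : ℝ):ℂ) * φ n y j) *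
      (starRingEnd ℂ) (φ m y j) = a n m) (ξ : Fin N → ℂ) (x : ℝ) :
    ∑ j, ‖∑ n, ξ n * φ n x j‖^2 ≤ K2 δ / (2 * √l) *
      (∑ n, ∑ m, ξ n * (starRingEnd ℂ) (ξ m) * a n m).re := by
  have hc0 : ∀ n, Continuous (φ n) := fun n => (hφ n).continuous
  have hf1 : ∀ n, ContDiff ℝ 1 (deriv (φ n)) := by
    intro n
    have : ContDiff ℝ (1+1) (φ n) := by norm_num; exact hφ n
    exact ((contDiff_succ_iff_deriv).1 this).2.2
  have hd : ∀ n x, HasDerivAt (φ n) (deriv (φ n) x) x := fun n x =>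
    ((hφ n).differentiable (by norm_num)).differentiableAt.hasDerivAt
  have hd2 : ∀ n x, HasDerivAt (deriv (φ n)) (deriv (deriv (φ n)) x) x := fun n x =>
    ((hf1 n).differentiable (by norm_num)).differentiableAt.hasDerivAt
  have hc2 : ∀ n, Continuous (deriv (deriv (φ n))) := fun n => (hf1 n).continuous_deriv (by norm_num)
  have hc0j : ∀ n j, Continuous (fun y => φ n y j) := fun n j => (continuous_apply j).comp (hc0 n)
  have hc2j : ∀ n j, Continuous (fun y => deriv (deriv (φ n)) y j) :=
    fun n j => (continuous_apply j).comp (hc2 n)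
  let f : Fin M → ℝ → ℂ := fun j y => ∑ n, ξ n * φ n y j
  have df : ∀ j, deriv (f j) = fun y => ∑ n, ξ n * deriv (φ n) y j := by
    intro j; ext y
    apply HasDerivAt.deriv
    apply HasDerivAt.fun_sum
    intro n _
    exact ((hasDerivAt_pi.1 (hd n y)) j).const_mul _
  have ddf : ∀ j, deriv (deriv (f j)) = fun y => ∑ n, ξ n * deriv (deriv (φ n)) y j := by
    intro j; rw [df]; ext y
    apply HasDerivAt.deriv
    apply HasDerivAt.fun_sum
    intro n _
    exact ((hasDerivAt_pi.1 (hd2 n y)) j).const_mul _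
  have hfm : ∀ n j, ∫ y in (0:ℝ)..(2*π), φ n y j = 0 := by
    intro n j
    have := (ContinuousLinearMap.proj (R := ℂ) (φ := fun _ : Fin M => ℂ) j).intervalIntegral_comp_comm
      ((hc0 n).intervalIntegrable (μ := volume) 0 (2*π))
    rw [hmean] at this
    simpa using this
  have key : ∀ j, ‖f j x‖^2 ≤ _ := fun j => scalar_bound hδ0 hδ1 hl (f j)
    (ContDiff.sum fun n _ => contDiff_const.mul (contDiff_pi.1 (hφ n) j))
    (fun y => by simp only [f]; exact Finset.sum_congr rfl fun n _ => by rw [hper n y])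
    (by
      simp only [f]
      rw [intervalIntegral.integral_finsetSum]
      · simp [hfm]
      · intro n _
        exact ((hc0j n j).const_mul _).intervalIntegrable _ _) x
  refine (Finset.sum_le_sum fun j _ => key j).trans_eq ?_
  rw [← Finset.mul_sum, ← Complex.re_sum]
  congr 2
  simp_rw [← ha, ddf]
  rw [← intervalIntegral.integral_finsetSum]
  · simp_rw [← intervalIntegral.integral_const_mul]
    have hI : ∀ n m, Continuous fun y => ξ n * (starRingEnd ℂ) (ξ m) *
      ∑ j, (-deriv (deriv (φ n)) y j + ((l - δ : ℝ):ℂ) * φ n y j) *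
        (starRingEnd ℂ) (φ m y j) := by
      intro n m
      refine continuous_const.mul (continuous_finsetSum _ fun j _ => ?_)
      exact ((hc2j n j).neg.add (continuous_const.mul (hc0j n j))).mul
        (Complex.continuous_conj.comp (hc0j m j))
    have : ∀ n, ∑ m, ∫ y in (0:ℝ)..(2*π), ξ n * (starRingEnd ℂ) (ξ m) *
      ∑ j, (-deriv (deriv (φ n)) y j + ((l - δ : ℝ):ℂ) * φ n y j) *
        (starRingEnd ℂ) (φ m y j) = ∫ y in (0:ℝ)..(2*π), ∑ m, ξ n * (starRingEnd ℂ) (ξ m) *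
      ∑ j, (-deriv (deriv (φ n)) y j + ((l - δ : ℝ):ℂ) * φ n y j) *
        (starRingEnd ℂ) (φ m y j) := by
      intro n
      rw [intervalIntegral.integral_finsetSum]
      intro m _
      exact (hI n m).intervalIntegrable _ _
    simp_rw [this]
    rw [← intervalIntegral.integral_finsetSum]
    · congr 1
      ext y
      simp only [f, map_sum, map_mul, Finset.mul_sum, Finset.sum_mul, ← Finset.sum_neg_distrib,
        ← Finset.sum_add_distrib]
      rw [Finset.sum_comm]
      conv_rhs => rw [Finset.sum_comm]
      refine Finset.sum_congr rfl fun m _ => ?_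
      rw [Finset.sum_comm]
      refine Finset.sum_congr rfl fun n _ => ?_
      refine Finset.sum_congr rfl fun j _ => ?_
      ring
    · intro n _
      exact (continuous_finsetSum _ fun m _ => hI n m).intervalIntegrable _ _
  · intro j _
    apply Continuous.intervalIntegrable
    have h1 : Continuous fun y => f j y := continuous_finsetSum _ fun n _ => continuous_const.mul (hc0j n j)
    have h2 : Continuous fun y => ∑ n, ξ n * deriv (deriv (φ n)) y j :=
      continuous_finsetSum _ fun n _ => continuous_const.mul (hc2j n j)
    exact (h2.neg.add (continuous_const.mul h1)).mul (Complex.continuous_conj.comp h1)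

lemma heig_int {δ l : ℝ} 
    {M N : ℕ} (V : ℝ → Matrix (Fin M) (Fin M) ℂ) (hVc : Continuous V)
    (φ : Fin N → ℝ → Fin M → ℂ) (hφ : ∀ n, ContDiff ℝ 2 (φ n))
    (hmean : ∀ n, (∫ t in (0:ℝ)..(2 * π), φ n t) = 0)
    (hortho : ∀ n m, (∫ x in (0:ℝ)..(2 * π), ∑ j, φ n x j * (starRingEnd ℂ) (φ m x j)) =
      if n = m then 1 else 0)
    (μ : Fin N → ℝ)
    (heig : ∀ n x, -(deriv (deriv (φ n)) x) - δ • φ n x -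
        projP (fun t => (V t).mulVec (projP (φ n) t)) x = (-(μ n)) • φ n x) (n m : Fin N) :
    ∫ y in (0:ℝ)..(2*π), ∑ j, (-deriv (deriv (φ n)) y j + ((l - δ : ℝ):ℂ) * φ n y j) *
      (starRingEnd ℂ) (φ m y j) =
    (∫ y in (0:ℝ)..(2*π), ∑ j, (V y).mulVec (φ n y) j * (starRingEnd ℂ) (φ m y j)) +
      if n = m then ((l - μ n : ℝ) : ℂ) else 0 := by
  have hc0 : ∀ n, Continuous (φ n) := fun n => (hφ n).continuous
  have hc0j : ∀ n j, Continuous (fun y => φ n y j) := fun n j => (continuous_apply j).comp (hc0 n)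
  have hcc : ∀ n j, Continuous (fun y => (starRingEnd ℂ) (φ n y j)) :=
    fun n j => Complex.continuous_conj.comp (hc0j n j)
  have hP : ∀ t, projP (φ n) t = φ n t := by
    intro t; simp [projP, hmean]
  have heig := heig n
  simp only [hP] at heig
  obtain ⟨w, hw⟩ : ∃ w : Fin M → ℂ, w = (1 / (2 * π)) • ∫ t in (0:ℝ)..(2 * π), (V t).mulVec (φ n t) := ⟨_, rfl⟩
  have h1 : ∀ y j, -deriv (deriv (φ n)) y j + ((l - δ : ℝ):ℂ) * φ n y j =
      (V y).mulVec (φ n y) j - w j + ((l - μ n : ℝ) : ℂ) * φ n y j := by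
    intro y j
    have := congrFun (heig y) j
    simp only [projP, ← hw, Pi.sub_apply, Pi.neg_apply, Pi.smul_apply, Complex.real_smul] at this
    push_cast at this ⊢
    linear_combination this
  have hfm : ∀ j, ∫ y in (0:ℝ)..(2*π), (starRingEnd ℂ) (φ m y j) = 0 := by
    intro j
    have := (ContinuousLinearMap.proj (R := ℂ) (φ := fun _ : Fin M => ℂ) j).intervalIntegral_comp_comm
      ((hc0 m).intervalIntegrable (μ := volume) 0 (2*π))
    rw [hmean] at this
    have h2 : ∫ y in (0:ℝ)..(2*π), φ m y j = 0 := by simpa using this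
    rw [intervalIntegral.integral_of_le two_pi_pos'.le] at h2 ⊢
    rw [integral_conj, h2, map_zero]
  have hVj : ∀ j, Continuous fun y => (V y).mulVec (φ n y) j := fun j =>
    (continuous_apply j).comp (hVc.matrix_mulVec (hc0 n))
  have e : ∀ y, ∑ j, (-deriv (deriv (φ n)) y j + ((l - δ : ℝ):ℂ) * φ n y j) *
      (starRingEnd ℂ) (φ m y j) = ∑ j, (V y).mulVec (φ n y) j * (starRingEnd ℂ) (φ m y j) 
       - ∑ j, w j * (starRingEnd ℂ) (φ m y j) 
       + ((l - μ n : ℝ) : ℂ) * ∑ j, φ n y j * (starRingEnd ℂ) (φ m y j) := by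
    intro y
    rw [Finset.mul_sum, ← Finset.sum_sub_distrib, ← Finset.sum_add_distrib]
    refine Finset.sum_congr rfl fun j _ => ?_
    rw [h1]; ring
  have c1 : Continuous fun y => ∑ j, (V y).mulVec (φ n y) j * (starRingEnd ℂ) (φ m y j) :=
    continuous_finsetSum _ fun j _ => (hVj j).mul (hcc m j)
  have c2 : Continuous fun y => ∑ j, w j * (starRingEnd ℂ) (φ m y j) :=
    continuous_finsetSum _ fun j _ => continuous_const.mul (hcc m j)
  have c3 : Continuous fun y => ((l - μ n : ℝ) : ℂ) * ∑ j, φ n y j * (starRingEnd ℂ) (φ m y j) :=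
    continuous_const.mul (continuous_finsetSum _ fun j _ => (hc0j n j).mul (hcc m j))
  have c12 : Continuous fun y => ∑ j, (V y).mulVec (φ n y) j * (starRingEnd ℂ) (φ m y j)
       - ∑ j, w j * (starRingEnd ℂ) (φ m y j) := c1.sub c2
  simp_rw [e]
  rw [intervalIntegral.integral_add (c12.intervalIntegrable _ _) (c3.intervalIntegrable _ _),
    intervalIntegral.integral_sub (c1.intervalIntegrable _ _) (c2.intervalIntegrable _ _),
    intervalIntegral.integral_const_mul, hortho]
  have : ∫ y in (0:ℝ)..(2*π), ∑ j, w j * (starRingEnd ℂ) (φ m y j) = 0 := by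
    rw [intervalIntegral.integral_finsetSum]
    · simp [hfm]
    · intro j _
      exact (continuous_const.mul (hcc m j)).intervalIntegrable _ _
  rw [this]
  split_ifs <;> simp

lemma cube_bound {K u A : ℝ} (hK : 0 < K) (hu : 0 ≤ u) (hz : u = 0 → A = 0)
    (h : ∀ l : ℝ, 0 < l → u^2 ≤ K / (2 * √l) * (A + l * u)) : u^3 / K^2 ≤ A := by
  rcases hu.eq_or_lt with h0 | h0
  · rw [hz h0.symm, ← h0]; simp
  · have := h ((u/K)^2) (by positivity)
    rw [Real.sqrt_sq (by positivity)] at this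
    have e : K / (2 * (u / K)) * (A + (u/K)^2 * u) = (K^2 * A + u^3) / (2 * u) := by
      field_simp
    rw [e, le_div_iff₀ (by positivity)] at this
    rw [div_le_iff₀ (by positivity)]
    nlinarith

theorem stmt_14 (δ : ℝ) (hδ0 : 0 ≤ δ) (hδ1 : δ < 1)
    (M N : ℕ) (hM : 1 ≤ M)
    (V : ℝ → Matrix (Fin M) (Fin M) ℂ) (hVc : Continuous V)
    (hVper : Function.Periodic V (2 * π)) (hV : ∀ x, (V x).PosSemidef)
    (φ : Fin N → ℝ → Fin M → ℂ) (hφ : ∀ n, ContDiff ℝ 2 (φ n))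
    (hper : ∀ n, Function.Periodic (φ n) (2 * π))
    (hmean : ∀ n, (∫ t in (0:ℝ)..(2 * π), φ n t) = 0)
    (hortho : ∀ n m, (∫ x in (0:ℝ)..(2 * π), ∑ j, φ n x j * (starRingEnd ℂ) (φ m x j)) =
      if n = m then 1 else 0)
    (μ : Fin N → ℝ) (hμ : ∀ n, 0 < μ n)
    (heig : ∀ n x, -(deriv (deriv (φ n)) x) - δ • φ n x -
        projP (fun t => (V t).mulVec (projP (φ n) t)) x = (-(μ n)) • φ n x) :
    ∑ n, μ n ≤ (2 / (3 * Real.sqrt 3)) * K2 δ *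
      ∫ x in (0:ℝ)..(2 * π), ∑ i, (hV x).1.eigenvalues i ^ (3 / 2 : ℝ) := by
  have hK := k2_pos hδ0 hδ1
  set K := K2 δ with hKd
  let b : Fin N → Fin N → ℂ := fun n m =>
    ∫ y in (0:ℝ)..(2*π), ∑ j, (V y).mulVec (φ n y) j * (starRingEnd ℂ) (φ m y j)
  let a : Fin N → Fin N → ℂ := fun n m => b n m - if n = m then (μ n : ℂ) else 0
  have hc0 : ∀ n, Continuous (φ n) := fun n => (hφ n).continuous
  have hc0j : ∀ n j, Continuous (fun y => φ n y j) := fun n j => (continuous_apply j).comp (hc0 n)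
  have hcc : ∀ n j, Continuous (fun y => (starRingEnd ℂ) (φ n y j)) :=
    fun n j => Complex.continuous_conj.comp (hc0j n j)
  have hVj : ∀ n j, Continuous fun y => (V y).mulVec (φ n y) j := fun n j =>
    (continuous_apply j).comp (hVc.matrix_mulVec (hc0 n))
  -- pointwise inequality
  have pt : ∀ x, (∑ n, ∑ j, (V x).mulVec (φ n x) j * (starRingEnd ℂ) (φ n x j)).re ≤
      (2 / (3 * √3)) * K * ∑ i, (hV x).1.eigenvalues i ^ (3 / 2 : ℝ) +
      (∑ n, ∑ m, a n m * ∑ j, φ m x j * (starRingEnd ℂ) (φ n x j)).re := by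
    intro x
    obtain ⟨e, he1, he2, he3⟩ := diag (V x) (hV x).1
    let z : Fin M → Fin N → ℂ := fun i n => ∑ j, (starRingEnd ℂ) (e i j) * φ n x j
    let u : Fin M → ℝ := fun i => ∑ n, ‖z i n‖^2
    let A : Fin M → ℝ := fun i => (∑ n, ∑ m, (starRingEnd ℂ) (z i n) * z i m * a n m).re
    have hu : ∀ i, 0 ≤ u i := fun i => Finset.sum_nonneg fun n _ => sq_nonneg _
    have hL : (∑ n, ∑ j, (V x).mulVec (φ n x) j * (starRingEnd ℂ) (φ n x j)).re =
        ∑ i, (hV x).1.eigenvalues i * u i := by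
      simp_rw [he2]
      rw [Finset.sum_comm]
      simp_rw [← Finset.mul_sum, Complex.re_sum, Complex.re_ofReal_mul, Complex.re_sum,
        Complex.ofReal_re]
      rfl
    have hA : ∑ i, A i = (∑ n, ∑ m, a n m * ∑ j, φ m x j * (starRingEnd ℂ) (φ n x j)).re := by
      simp only [A]
      rw [← Complex.re_sum, Finset.sum_comm]
      congr 1
      refine Finset.sum_congr rfl fun n _ => ?_
      rw [Finset.sum_comm]
      refine Finset.sum_congr rfl fun m _ => ?_
      simp only [mul_comm (φ m x _)]
      rw [← he1, Finset.mul_sum]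
      refine Finset.sum_congr rfl fun i _ => ?_
      simp only [z]
      ring
    have hcube : ∀ i, u i ^ 3 / K^2 ≤ A i := by
      intro i
      apply cube_bound hK (hu i)
      · intro h0
        have hz : ∀ n, z i n = 0 := by
          intro n
          have := (Finset.sum_eq_zero_iff_of_nonneg (fun n _ => sq_nonneg ‖z i n‖)).1 h0 n
            (Finset.mem_univ n)
          simpa using this
        simp [A, hz]
      · intro l hl
        have h1 := vec_bound hδ0 hδ1 hl φ hφ hper hmean
          (fun n m => b n m + if n = m then ((l - μ n : ℝ) : ℂ) else 0)
          (fun n m => heig_int V hVc φ hφ hmean hortho μ heig n m)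
          (fun n => (starRingEnd ℂ) (z i n)) x
        have h2 := he3 i (fun j => ∑ n, (starRingEnd ℂ) (z i n) * φ n x j)
        have h3 : ∑ j, (starRingEnd ℂ) (e i j) * ∑ n, (starRingEnd ℂ) (z i n) * φ n x j = (u i : ℂ) := by
          simp only [Finset.mul_sum]
          rw [Finset.sum_comm]
          simp only [u]
          push_cast
          refine Finset.sum_congr rfl fun n _ => ?_
          rw [← Complex.conj_mul']
          conv_rhs => rw [show z i n = ∑ j, (starRingEnd ℂ) (e i j) * φ n x j from rfl, Finset.mul_sum]
          refine Finset.sum_congr rfl fun j _ => ?_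
          ring
        have h4 : (∑ n, ∑ m, (starRingEnd ℂ) (z i n) * (starRingEnd ℂ) ((starRingEnd ℂ) (z i m)) *
            (b n m + if n = m then ((l - μ n : ℝ) : ℂ) else 0)).re = A i + l * u i := by
          have h5 : ∀ n m, (starRingEnd ℂ) (z i n) * (starRingEnd ℂ) ((starRingEnd ℂ) (z i m)) *
            (b n m + if n = m then ((l - μ n : ℝ) : ℂ) else 0) =
            (starRingEnd ℂ) (z i n) * z i m * a n m +
              if n = m then (l : ℂ) * ((starRingEnd ℂ) (z i n) * z i m) else 0 := by
            intro n m
            simp only [a, Complex.conj_conj]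
            split_ifs
            · push_cast; ring
            · ring
          simp_rw [h5, Finset.sum_add_distrib]
          rw [Complex.add_re]
          congr 1
          simp only [Finset.sum_ite_eq, Finset.mem_univ, if_true]
          rw [← Finset.mul_sum, Complex.re_ofReal_mul]
          congr 1
          simp only [Complex.conj_mul', u]
          norm_cast
        rw [h3, Complex.norm_real, Real.norm_eq_abs, sq_abs] at h2
        rw [h4] at h1
        exact h2.trans h1
    rw [hL, ← hA, Finset.mul_sum, ← Finset.sum_add_distrib]
    refine Finset.sum_le_sum fun i _ => ?_
    exact (young hK (hu i) ((hV x).eigenvalues_nonneg i)).trans (by linarith [hcube i])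
  -- integrate
  have cT := tr_cont V hVc hV
  have c1 : Continuous fun x => ∑ n, ∑ j, (V x).mulVec (φ n x) j * (starRingEnd ℂ) (φ n x j) :=
    continuous_finsetSum _ fun n _ => continuous_finsetSum _ fun j _ => (hVj n j).mul (hcc n j)
  have c1' : ∀ n, Continuous fun x => ∑ j, (V x).mulVec (φ n x) j * (starRingEnd ℂ) (φ n x j) :=
    fun n => continuous_finsetSum _ fun j _ => (hVj n j).mul (hcc n j)
  have c2'' : ∀ n m, Continuous fun x => a n m * ∑ j, φ m x j * (starRingEnd ℂ) (φ n x j) :=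
    fun n m => continuous_const.mul (continuous_finsetSum _ fun j _ => (hc0j m j).mul (hcc n j))
  have c2' : ∀ n, Continuous fun x => ∑ m, a n m * ∑ j, φ m x j * (starRingEnd ℂ) (φ n x j) :=
    fun n => continuous_finsetSum _ fun m _ => c2'' n m
  have c2 : Continuous fun x => ∑ n, ∑ m, a n m * ∑ j, φ m x j * (starRingEnd ℂ) (φ n x j) :=
    continuous_finsetSum _ fun n _ => c2' n
  have hre : ∀ f : ℝ → ℂ, Continuous f →
      ∫ x in (0:ℝ)..(2*π), (f x).re = (∫ x in (0:ℝ)..(2*π), f x).re := fun f hf =>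
    Complex.reCLM.intervalIntegral_comp_comm (hf.intervalIntegrable _ _)
  have cR1 : Continuous fun x =>
      (∑ n, ∑ j, (V x).mulVec (φ n x) j * (starRingEnd ℂ) (φ n x j)).re :=
    Complex.continuous_re.comp c1
  have cR2 : Continuous fun x =>
      (∑ n, ∑ m, a n m * ∑ j, φ m x j * (starRingEnd ℂ) (φ n x j)).re :=
    Complex.continuous_re.comp c2
  have cT2 : Continuous fun x =>
      (2 / (3 * √3)) * K * ∑ i, (hV x).1.eigenvalues i ^ (3 / 2 : ℝ) := continuous_const.mul cT
  have cS : Continuous fun x => (2 / (3 * √3)) * K * ∑ i, (hV x).1.eigenvalues i ^ (3 / 2 : ℝ) +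
      (∑ n, ∑ m, a n m * ∑ j, φ m x j * (starRingEnd ℂ) (φ n x j)).re := cT2.add cR2
  have hI := intervalIntegral.integral_mono (μ := volume) two_pi_pos'.le
    (cR1.intervalIntegrable _ _) (cS.intervalIntegrable _ _) pt
  rw [intervalIntegral.integral_add (cT2.intervalIntegrable _ _) (cR2.intervalIntegrable _ _),
    intervalIntegral.integral_const_mul] at hI
  rw [hre _ c1, hre _ c2] at hI
  have i1 : ∫ x in (0:ℝ)..(2*π), ∑ n, ∑ j, (V x).mulVec (φ n x) j * (starRingEnd ℂ) (φ n x j) =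
      ∑ n, b n n := by
    rw [intervalIntegral.integral_finsetSum]
    intro n _
    exact (c1' n).intervalIntegrable _ _
  have i2 : ∫ x in (0:ℝ)..(2*π), ∑ n, ∑ m, a n m * ∑ j, φ m x j * (starRingEnd ℂ) (φ n x j) =
      ∑ n, b n n - ((∑ n, μ n : ℝ) : ℂ) := by
    rw [intervalIntegral.integral_finsetSum (fun n _ => (c2' n).intervalIntegrable _ _)]
    push_cast
    rw [← Finset.sum_sub_distrib]
    refine Finset.sum_congr rfl fun n _ => ?_
    rw [intervalIntegral.integral_finsetSum (fun m _ => (c2'' n m).intervalIntegrable _ _)]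
    simp_rw [intervalIntegral.integral_const_mul, hortho]
    simp [a]
  rw [i1, i2, Complex.sub_re, Complex.ofReal_re] at hI
  linarith
end

section
/- Let 0 ≤ δ < 1, M ≥ 1, and let γ ≥ 1 be real. Let V : ℝ → Matrix(M, M, ℂ) be continuous and 2π-periodic with V(x) Hermitian and positive semidefinite for every x. Let P act componentwise by (Pψ)(x) = ψ(x) − (1/(2π)) ∫_0^{2π} ψ(t) dt. Suppose φ_1, …, φ_N : ℝ → ℂ^M are C² functions, 2π-periodic, with ∫_0^{2π} φ_n(t) dt = 0, orthonormal in L²((0, 2π); ℂ^M), and for each n there is μ_n > 0 such that −φ_n''(x) − δ φ_n(x) − (P(V · (Pφ_n)))(x) = −μ_n φ_n(x) for all x. Then ∑_{n=1}^N μ_n^γ ≤ (π/√3) · K₂(δ) · (Γ(γ+1)/(2√π · Γ(γ+3/2))) · ∫_0^{2π} Tr[V(x)^{γ + 1/2}] dx. -/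
open Real MeasureTheory ComplexOrder

lemma k2_base_summable {δ : ℝ} (hδ1 : δ < 1) (l : ℝ) (hl : 0 < l) :
    Summable (fun k : {k : ℤ // k ≠ 0} => 1 / ((k.1 : ℝ) ^ 2 - δ + l)) := by
  have h1 : Summable (fun k : ℤ => 1 / (k : ℝ) ^ 2) := by
    simpa using Real.summable_one_div_int_pow (p := 2) |>.2 (by norm_num)
  have h2 : Summable (fun k : {k : ℤ // k ≠ 0} => (1 / (1 - max δ 0)) * (1 / (k.1 : ℝ) ^ 2)) :=
    (h1.comp_injective Subtype.val_injective).mul_left _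
  have hm : max δ 0 < 1 := max_lt hδ1 one_pos
  refine Summable.of_nonneg_of_le ?_ ?_ h2
  · rintro ⟨k, hk⟩
    have : (1 : ℝ) ≤ (k : ℝ) ^ 2 := by
      have : 1 ≤ k ^ 2 := by
        have := Int.one_le_abs hk; nlinarith [sq_abs k]
      exact_mod_cast this
    simp only
    apply one_div_nonneg.2; linarith
  · rintro ⟨k, hk⟩
    have : (1 : ℝ) ≤ (k : ℝ) ^ 2 := by
      have : 1 ≤ k ^ 2 := by
        have := Int.one_le_abs hk; nlinarith [sq_abs k]
      exact_mod_cast this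
    simp only
    rw [one_div_mul_one_div]
    apply one_div_le_one_div_of_le
    · apply mul_pos <;> linarith
    · have := le_max_left δ 0
      have := le_max_right δ 0
      nlinarith

lemma k2_nat_bound (a s : ℝ) (ha : 0 < a) (ha1 : a ≤ 1) (hs : 0 < s) (n : ℕ) :
    ∑ k ∈ Finset.range n, s / (a * ((k : ℝ) + 1) ^ 2 + s ^ 2) ≤ 2 / a - 2 * s / (a * (n + s)) := by
  induction n with
  | zero => simp; field_simp; simp
  | succ n ih =>
    rw [Finset.sum_range_succ]
    have hn : (0 : ℝ) ≤ n := n.cast_nonneg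
    have : s / (a * ((n : ℝ) + 1) ^ 2 + s ^ 2) ≤
        2 * s / (a * (n + s)) - 2 * s / (a * ((n + 1 : ℕ) + s)) := by
      have e : 2 * s / (a * (n + s)) - 2 * s / (a * ((n + 1 : ℕ) + s)) =
          s / (a * ((n + s) * (n + 1 + s)) / 2) := by
        push_cast
        field_simp
        ring
      rw [e]
      apply div_le_div_of_nonneg_left hs.le (by positivity)
      have : a * s ^ 2 ≤ s ^ 2 := by nlinarith [sq_nonneg s]
      nlinarith [mul_nonneg ha.le (sq_nonneg ((n : ℝ) + 1 - s)), mul_nonneg ha.le (by positivity : 0 ≤ (n : ℝ) + s)]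
    linarith

lemma k2_term_bound {δ : ℝ} (hδ0 : 0 ≤ δ) (hδ1 : δ < 1) (l : ℝ) (hl : 0 < l) :
    Real.sqrt l / π * ∑' k : {k : ℤ // k ≠ 0}, 1 / ((k.1 : ℝ) ^ 2 - δ + l) ≤
      (4 / (1 - δ)) / π := by
  set s := Real.sqrt l with hs
  have hspos : 0 < s := Real.sqrt_pos.2 hl
  have hsl : l = s ^ 2 := (Real.sq_sqrt hl.le).symm
  have ha : 0 < 1 - δ := by linarith
  rw [div_mul_eq_mul_div, ← tsum_mul_left]
  apply div_le_div_of_nonneg_right _ pi_pos.le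
  have hsum := (k2_base_summable hδ1 l hl).mul_left s
  apply hsum.tsum_le_of_sum_le
  intro t
  classical
  -- bound by positive and negative parts
  have hterm : ∀ k : {k : ℤ // k ≠ 0}, s * (1 / ((k.1 : ℝ) ^ 2 - δ + l)) ≤
      s / ((1 - δ) * ((k.1 : ℝ)) ^ 2 + s ^ 2) := by
    rintro ⟨k, hk⟩
    have : (1 : ℝ) ≤ (k : ℝ) ^ 2 := by
      have : 1 ≤ k ^ 2 := by
        have := Int.one_le_abs hk; nlinarith [sq_abs k]
      exact_mod_cast this
    simp only
    rw [mul_one_div]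
    apply div_le_div_of_nonneg_left hspos.le (by positivity)
    rw [hsl]; nlinarith
  refine (Finset.sum_le_sum fun k _ => hterm k).trans ?_
  let g : ℕ → ℝ := fun m => s / ((1 - δ) * ((m : ℝ) + 1) ^ 2 + s ^ 2)
  have hg : ∀ m, 0 ≤ g m := fun m => by positivity
  have hfin : ∀ T : Finset ℕ, ∑ m ∈ T, g m ≤ 2 / (1 - δ) := by
    intro T
    obtain ⟨n, hn⟩ := T.exists_nat_subset_range
    refine (Finset.sum_le_sum_of_subset_of_nonneg hn fun _ _ _ => hg _).trans ?_
    refine (k2_nat_bound (1 - δ) s ha (by linarith) hspos n).trans ?_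
    have : 0 ≤ 2 * s / ((1 - δ) * (n + s)) := by positivity
    linarith
  have hG : ∀ k : {k : ℤ // k ≠ 0}, s / ((1 - δ) * ((k.1 : ℝ)) ^ 2 + s ^ 2) =
      g (k.1.natAbs - 1) := by
    rintro ⟨k, hk⟩
    simp only [g]
    have h1 : 1 ≤ k.natAbs := Int.natAbs_pos.2 hk
    rw [Nat.cast_sub h1]
    simp
  rw [Finset.sum_congr rfl fun k _ => hG k]
  rw [← Finset.sum_filter_add_sum_filter_not t (fun k => 0 < k.1)]
  have e : 4 / (1 - δ) = 2 / (1 - δ) + 2 / (1 - δ) := by ring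
  rw [e]
  apply add_le_add
  · rw [← Finset.sum_image (f := g) (g := fun k : {k : ℤ // k ≠ 0} => k.1.natAbs - 1)]
    · exact hfin _
    · rintro ⟨a, ha'⟩ h1 ⟨b, hb'⟩ h2 h
      simp at h1 h2 h ⊢
      omega
  · rw [← Finset.sum_image (f := g) (g := fun k : {k : ℤ // k ≠ 0} => k.1.natAbs - 1)]
    · exact hfin _
    · rintro ⟨a, ha'⟩ h1 ⟨b, hb'⟩ h2 h
      simp at h1 h2 h ⊢
      omega

lemma k2_sum_le {δ : ℝ} (hδ0 : 0 ≤ δ) (hδ1 : δ < 1) (s : ℝ) (hs : 0 < s) :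
    ∑' k : {k : ℤ // k ≠ 0}, 1 / ((k.1 : ℝ) ^ 2 - δ + s ^ 2) ≤ π * K2 δ / s := by
  have := le_ciSup (k2_bdd hδ0 hδ1) ⟨s ^ 2, by simp; positivity⟩
  simp only [Real.sqrt_sq hs.le] at this
  change _ ≤ K2 δ at this
  rw [le_div_iff₀ hs]
  have hp := pi_pos
  calc _ = π * (s / π * ∑' k : {k : ℤ // k ≠ 0}, 1 / ((k.1 : ℝ) ^ 2 - δ + s ^ 2)) := by
        field_simp
    _ ≤ _ := by gcongr

lemma periodic_deriv' {E : Type*} [NormedAddCommGroup E] [NormedSpace ℝ E] {u : ℝ → E} {c : ℝ}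
    (h : Function.Periodic u c) : Function.Periodic (deriv u) c := by
  intro x
  have : (fun y => u (y + c)) = u := funext h
  rw [← deriv_comp_add_const, this]

lemma exists_circle_lift {u : ℝ → ℂ} (hu : Continuous u) (hp : Function.Periodic u (2 * π)) :
    ∃ F : C(AddCircle (2 * π), ℂ), ∀ x : ℝ, F (x : AddCircle (2 * π)) = u x := by
  refine ⟨⟨hp.lift, ?_⟩, fun x => hp.lift_coe x⟩
  exact continuous_quot_lift _ hu

instance two_pi_fact : Fact (0 < 2 * π) := ⟨by positivity⟩

lemma parseval_circle {u : ℝ → ℂ} {F : C(AddCircle (2 * π), ℂ)}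
    (hF : ∀ x : ℝ, F (x : AddCircle (2 * π)) = u x) :
    HasSum (fun k : ℤ => ‖fourierCoeff F k‖ ^ 2) ((1 / (2 * π)) * ∫ x in (0:ℝ)..(2 * π), ‖u x‖ ^ 2) := by
  have h := hasSum_sq_fourierCoeff (ContinuousMap.toLp (E := ℂ) 2 AddCircle.haarAddCircle ℂ F)
  simp_rw [fourierCoeff_toLp] at h
  convert h using 1
  have e : ∫ t : AddCircle (2 * π), ‖(ContinuousMap.toLp (E := ℂ) 2 AddCircle.haarAddCircle ℂ F) t‖ ^ 2
      ∂AddCircle.haarAddCircle = ∫ t : AddCircle (2 * π), ‖F t‖ ^ 2 ∂AddCircle.haarAddCircle := by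
    apply integral_congr_ae
    filter_upwards [ContinuousMap.coeFn_toLp (p := 2) (𝕜 := ℂ) AddCircle.haarAddCircle F] with x hx
    rw [hx]
  rw [e, AddCircle.integral_haarAddCircle]
  have := AddCircle.intervalIntegral_preimage (2 * π) 0 (fun z => ‖F z‖ ^ 2)
  rw [zero_add] at this
  rw [← this]
  simp [hF]

lemma fourierCoeff_deriv_circle {u : ℝ → ℂ} (hu : ContDiff ℝ 1 u)
    (hp : Function.Periodic u (2 * π)) {F G : C(AddCircle (2 * π), ℂ)}
    (hF : ∀ x : ℝ, F (x : AddCircle (2 * π)) = u x)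
    (hG : ∀ x : ℝ, G (x : AddCircle (2 * π)) = deriv u x) (k : ℤ) :
    fourierCoeff G k = Complex.I * k * fourierCoeff F k := by
  rw [fourierCoeff_eq_intervalIntegral _ _ 0, fourierCoeff_eq_intervalIntegral _ _ 0, zero_add]
  simp_rw [hF, hG]
  have hpi : (π : ℂ) ≠ 0 := by exact_mod_cast pi_ne_zero
  have hd : ∀ x : ℝ, HasDerivAt (fun y : ℝ => fourier (-k) (y : AddCircle (2 * π)) * u y)
      (-(Complex.I * k) * (fourier (-k) (x : AddCircle (2 * π)) * u x)
        + fourier (-k) (x : AddCircle (2 * π)) * deriv u x) x := by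
    intro x
    have h1 := hasDerivAt_fourier_neg (2 * π) k x
    have h2 := (hu.differentiable (by norm_num) x).hasDerivAt
    convert! h1.mul h2 using 2
    push_cast
    field_simp
  have hcu := hu.continuous
  have hcd := hu.continuous_deriv le_rfl
  have hcf : Continuous fun x : ℝ => fourier (-k) (x : AddCircle (2 * π)) :=
    (fourier (-k)).continuous.comp (AddCircle.continuous_mk' _)
  have hi := intervalIntegral.integral_eq_sub_of_hasDerivAt (a := 0) (b := 2 * π)
    (fun x _ => hd x) (Continuous.intervalIntegrable (by fun_prop) _ _)
  rw [intervalIntegral.integral_add (Continuous.intervalIntegrable (by fun_prop) _ _)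
    (Continuous.intervalIntegrable (by fun_prop) _ _), intervalIntegral.integral_const_mul] at hi
  have e0 : u (2 * π) = u 0 := by simpa using hp 0
  have e1 : ((2 * π : ℝ) : AddCircle (2 * π)) = ((0 : ℝ) : AddCircle (2 * π)) := by
    rw [AddCircle.coe_period]; rfl
  rw [e0, e1, sub_self] at hi
  simp only [smul_eq_mul, Complex.real_smul]
  linear_combination ((1 / (2 * π) : ℝ) : ℂ) * hi

lemma scalar_interp {δ : ℝ} (hδ0 : 0 ≤ δ) (hδ1 : δ < 1) {u : ℝ → ℂ} (hu : ContDiff ℝ 1 u)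
    (hp : Function.Periodic u (2 * π)) (hm : ∫ x in (0:ℝ)..(2 * π), u x = 0) (x s : ℝ) (hs : 0 < s) :
    ‖u x‖ ^ 2 ≤ K2 δ / 2 * (((∫ y in (0:ℝ)..(2 * π), ‖deriv u y‖ ^ 2)
      - δ * ∫ y in (0:ℝ)..(2 * π), ‖u y‖ ^ 2) / s + s * ∫ y in (0:ℝ)..(2 * π), ‖u y‖ ^ 2) := by
  obtain ⟨F, hF⟩ := exists_circle_lift hu.continuous hp
  obtain ⟨G, hG⟩ := exists_circle_lift (hu.continuous_deriv le_rfl) (periodic_deriv' hp)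
  have hPF := parseval_circle hF
  have hPG := parseval_circle hG
  set A := ∫ y in (0:ℝ)..(2 * π), ‖deriv u y‖ ^ 2
  set B := ∫ y in (0:ℝ)..(2 * π), ‖u y‖ ^ 2
  set c := fourierCoeff F with hc
  have hc0 : c 0 = 0 := by
    rw [hc, fourierCoeff_eq_intervalIntegral _ _ 0, zero_add]
    simp_rw [hF]
    simp [hm]
  have hGc : ∀ k, ‖fourierCoeff G k‖ ^ 2 = (k : ℝ) ^ 2 * ‖c k‖ ^ 2 := by
    intro k
    rw [fourierCoeff_deriv_circle hu hp hF hG k, norm_mul, norm_mul, mul_pow, mul_pow]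
    simp [← hc]
  simp_rw [hGc] at hPG
  have hW : HasSum (fun k : ℤ => ((k : ℝ) ^ 2 - δ + s ^ 2) * ‖c k‖ ^ 2)
      ((1 / (2 * π)) * (A - δ * B + s ^ 2 * B)) := by
    convert! hPG.add (hPF.mul_left (s ^ 2 - δ)) using 1
    · ext k; ring
    · ring
  have hk1 : ∀ k : {k : ℤ // k ≠ 0}, (1 : ℝ) ≤ (k.1 : ℝ) ^ 2 := by
    rintro ⟨k, hk⟩
    have : 1 ≤ k ^ 2 := by
      have := Int.one_le_abs hk; nlinarith [sq_abs k]
    exact_mod_cast this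
  have hwpos : ∀ k : {k : ℤ // k ≠ 0}, 0 < (k.1 : ℝ) ^ 2 - δ + s ^ 2 := by
    intro k
    have := hk1 k
    have := sq_nonneg s
    linarith
  have hWs : HasSum (fun k : {k : ℤ // k ≠ 0} => ((k.1 : ℝ) ^ 2 - δ + s ^ 2) * ‖c k.1‖ ^ 2)
      ((1 / (2 * π)) * (A - δ * B + s ^ 2 * B)) := by
    have := (hasSum_subtype_iff_of_support_subset (s := {k : ℤ | k ≠ 0}) (f := fun k : ℤ => ((k : ℝ) ^ 2 - δ + s ^ 2) * ‖c k‖ ^ 2) (a := (1 / (2 * π)) * (A - δ * B + s ^ 2 * B)) ?_).2 hW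
    · exact this
    · intro k hk h0
      apply hk
      simp [h0, hc0]
  have hR := k2_base_summable hδ1 (s ^ 2) (by positivity)
  have hRle := k2_sum_le hδ0 hδ1 s hs
  have hCS := Real.summable_and_inner_le_Lp_mul_Lq_tsum_of_nonneg (p := 2) (q := 2)
    (f := fun k : {k : ℤ // k ≠ 0} => √(1 / ((k.1 : ℝ) ^ 2 - δ + s ^ 2)))
    (g := fun k : {k : ℤ // k ≠ 0} => √(((k.1 : ℝ) ^ 2 - δ + s ^ 2) * ‖c k.1‖ ^ 2))
    (by constructor <;> norm_num) (fun _ => Real.sqrt_nonneg _) (fun _ => Real.sqrt_nonneg _)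
  have e1 : ∀ k : {k : ℤ // k ≠ 0}, √(1 / ((k.1 : ℝ) ^ 2 - δ + s ^ 2)) ^ (2 : ℝ) =
      1 / ((k.1 : ℝ) ^ 2 - δ + s ^ 2) := fun k => by
    rw [Real.rpow_two, Real.sq_sqrt (one_div_nonneg.2 (hwpos k).le)]
  have e2 : ∀ k : {k : ℤ // k ≠ 0}, √(((k.1 : ℝ) ^ 2 - δ + s ^ 2) * ‖c k.1‖ ^ 2) ^ (2 : ℝ) =
      ((k.1 : ℝ) ^ 2 - δ + s ^ 2) * ‖c k.1‖ ^ 2 := fun k => by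
    rw [Real.rpow_two, Real.sq_sqrt (mul_nonneg (hwpos k).le (sq_nonneg _))]
  have e3 : ∀ k : {k : ℤ // k ≠ 0}, √(1 / ((k.1 : ℝ) ^ 2 - δ + s ^ 2)) *
      √(((k.1 : ℝ) ^ 2 - δ + s ^ 2) * ‖c k.1‖ ^ 2) = ‖c k.1‖ := fun k => by
    rw [← Real.sqrt_mul (one_div_nonneg.2 (hwpos k).le), ← mul_assoc,
      one_div_mul_cancel (hwpos k).ne', one_mul, Real.sqrt_sq (norm_nonneg _)]
  simp_rw [e1, e2, e3] at hCS
  obtain ⟨hcs, hle⟩ := hCS hR hWs.summable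
  rw [hWs.tsum_eq] at hle
  have hcsum : Summable (fun k => ‖c k‖) := by
    have := (hasSum_subtype_iff_of_support_subset (s := {k : ℤ | k ≠ 0}) (f := fun k : ℤ => ‖c k‖)
      (a := ∑' k : {k : ℤ // k ≠ 0}, ‖c k.1‖) ?_).1 hcs.hasSum
    · exact this.summable
    · intro k hk h0
      apply hk
      simp [h0, hc0]
  have hceq : ∑' k, ‖c k‖ = ∑' k : {k : ℤ // k ≠ 0}, ‖c k.1‖ := by
    have := (hasSum_subtype_iff_of_support_subset (s := {k : ℤ | k ≠ 0}) (f := fun k : ℤ => ‖c k‖)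
      (a := ∑' k : {k : ℤ // k ≠ 0}, ‖c k.1‖) ?_).1 hcs.hasSum
    · exact this.tsum_eq
    · intro k hk h0
      apply hk
      simp [h0, hc0]
  have hpt := has_pointwise_sum_fourier_series_of_summable (f := F) hcsum.of_norm (x : AddCircle (2 * π))
  rw [hF] at hpt
  have hnm : ‖u x‖ ≤ ∑' k, ‖c k‖ := by
    rw [← hpt.tsum_eq]
    have : ∀ k : ℤ, ‖fourierCoeff F k • (fourier k (x : AddCircle (2 * π)) : ℂ)‖ = ‖c k‖ := by
      intro k
      rw [norm_smul, fourier_apply, Circle.norm_coe, mul_one]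
    refine (norm_tsum_le_tsum_norm ?_).trans ?_
    · simp_rw [this]; exact hcsum
    · simp_rw [this]; exact le_rfl
  have hX : 0 ≤ ∑' k : {k : ℤ // k ≠ 0}, 1 / ((k.1 : ℝ) ^ 2 - δ + s ^ 2) :=
    tsum_nonneg fun k => one_div_nonneg.2 (hwpos k).le
  have hY : 0 ≤ (1 / (2 * π)) * (A - δ * B + s ^ 2 * B) := by
    rw [← hWs.tsum_eq]
    exact tsum_nonneg fun k => mul_nonneg (hwpos k).le (sq_nonneg _)
  rw [← Real.sqrt_eq_rpow, ← Real.sqrt_eq_rpow, ← Real.sqrt_mul hX] at hle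
  have h3 : ‖u x‖ ≤ √((∑' k : {k : ℤ // k ≠ 0}, 1 / ((k.1 : ℝ) ^ 2 - δ + s ^ 2)) *
      ((1 / (2 * π)) * (A - δ * B + s ^ 2 * B))) := hnm.trans (hceq ▸ hle)
  have h4 := pow_le_pow_left₀ (norm_nonneg _) h3 2
  rw [Real.sq_sqrt (mul_nonneg hX hY)] at h4
  refine h4.trans ((mul_le_mul_of_nonneg_right hRle hY).trans (le_of_eq ?_))
  have := pi_ne_zero
  field_simp

open scoped Matrix.Norms.L2Operator in
lemma continuous_sum_eig {M : ℕ} {V : ℝ → Matrix (Fin M) (Fin M) ℂ} (hVc : Continuous V)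
    (hV : ∀ x, (V x).IsHermitian) {f : ℝ → ℝ} (hf : Continuous f) :
    Continuous fun x => ∑ i, f ((hV x).eigenvalues i) := by
  have h1 : Continuous fun x => cfc f (V x) := by
    refine Continuous.cfc_of_mem_nhdsSet (s := Set.univ) f Filter.univ_mem hVc ?_ hf.continuousOn
    intro x; exact (hV x)
  have h2 : Continuous fun x => (Matrix.trace (cfc f (V x))).re :=
    Complex.continuous_re.comp h1.matrix_trace
  convert h2 using 2 with x
  rw [(hV x).cfc_eq, Matrix.IsHermitian.cfc, Unitary.conjStarAlgAut_apply, Matrix.trace_mul_cycle]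
  simp [Matrix.trace]

lemma sq_expand {N M : ℕ} (S : Finset (Fin N)) (q : Fin N → ℂ) (g : Fin N → ℝ → Fin M → ℂ)
    (hg : ∀ n, Continuous (g n)) :
    ((∑ j, ∫ y in (0:ℝ)..(2 * π), ‖∑ n ∈ S, q n * g n y j‖ ^ 2 : ℝ) : ℂ) =
      ∑ n ∈ S, ∑ m ∈ S, q n * (starRingEnd ℂ) (q m) *
        ∫ y in (0:ℝ)..(2 * π), ∑ j, g n y j * (starRingEnd ℂ) (g m y j) := by
  have hgj : ∀ n j, Continuous fun y => g n y j := fun n j => (continuous_apply j).comp (hg n)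
  rw [Complex.ofReal_sum]
  simp_rw [← intervalIntegral.integral_ofReal]
  rw [← intervalIntegral.integral_finsetSum
    (fun j _ => Continuous.intervalIntegrable (by fun_prop) _ _)]
  simp_rw [← intervalIntegral.integral_const_mul]
  rw [Finset.sum_congr rfl fun n _ => (intervalIntegral.integral_finsetSum
    (fun m _ => Continuous.intervalIntegrable (by fun_prop) _ _)).symm]
  rw [← intervalIntegral.integral_finsetSum
    (fun m _ => Continuous.intervalIntegrable (by fun_prop) _ _)]
  congr 1
  ext y
  have : ∀ j, ((‖∑ n ∈ S, q n * g n y j‖ ^ 2 : ℝ) : ℂ) =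
      ∑ n ∈ S, ∑ m ∈ S, q n * (starRingEnd ℂ) (q m) * (g n y j * (starRingEnd ℂ) (g m y j)) := by
    intro j
    push_cast
    rw [← Complex.mul_conj', map_sum, Finset.sum_mul_sum]
    refine Finset.sum_congr rfl fun n _ => Finset.sum_congr rfl fun m _ => ?_
    rw [map_mul]; ring
  rw [Finset.sum_congr rfl fun j _ => this j, Finset.sum_comm]
  refine Finset.sum_congr rfl fun n _ => ?_
  rw [Finset.sum_comm]
  refine Finset.sum_congr rfl fun m _ => ?_
  rw [Finset.mul_sum]

lemma deriv_comp_j {M : ℕ} {g : ℝ → Fin M → ℂ} (hg : Differentiable ℝ g) (j : Fin M) (y : ℝ) :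
    HasDerivAt (fun y => g y j) (deriv g y j) y :=
  hasDerivAt_pi.1 (hg y).hasDerivAt j

lemma integral_comp_j {M : ℕ} {g : ℝ → Fin M → ℂ} (hg : Continuous g) (j : Fin M) :
    ∫ y in (0:ℝ)..(2 * π), g y j = (∫ y in (0:ℝ)..(2 * π), g y) j := by
  have := ContinuousLinearMap.intervalIntegral_comp_comm
    (ContinuousLinearMap.proj (R := ℝ) (φ := fun _ : Fin M => ℂ) j)
    (hg.intervalIntegrable (μ := volume) 0 (2 * π))
  simpa using this

lemma eden_foias {δ : ℝ} (hδ0 : 0 ≤ δ) (hδ1 : δ < 1) {M N : ℕ}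
    (φ : Fin N → ℝ → Fin M → ℂ) (hφ : ∀ n, ContDiff ℝ 2 (φ n))
    (hper : ∀ n, Function.Periodic (φ n) (2 * π))
    (hmean : ∀ n, (∫ t in (0:ℝ)..(2 * π), φ n t) = 0)
    (hortho : ∀ n m, (∫ x in (0:ℝ)..(2 * π), ∑ j, φ n x j * (starRingEnd ℂ) (φ m x j)) =
      if n = m then 1 else 0) (S : Finset (Fin N)) (p : Fin N → ℂ) (x : ℝ) (e : Fin M → ℂ)
    (he : ∑ j, ‖e j‖ ^ 2 = 1) (hp : ∀ n, p n = ∑ j, (starRingEnd ℂ) (e j) * φ n x j) :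
    (∑ n ∈ S, ‖p n‖ ^ 2) ^ 3 ≤ K2 δ ^ 2 * (∑ n ∈ S, ∑ m ∈ S, (starRingEnd ℂ) (p n) * p m *
      ((∫ y in (0:ℝ)..(2 * π), ∑ j, deriv (φ n) y j * (starRingEnd ℂ) (deriv (φ m) y j)) -
        δ * if n = m then 1 else 0)).re := by
  set ρ := ∑ n ∈ S, ‖p n‖ ^ 2 with hρ
  have hρ0 : 0 ≤ ρ := Finset.sum_nonneg fun _ _ => sq_nonneg _
  have hK := k2_pos hδ0 hδ1
  have hφ1 : ∀ n, ContDiff ℝ 1 (φ n) := fun n => (hφ n).of_le (by norm_num)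
  let u : Fin M → ℝ → ℂ := fun j y => ∑ n ∈ S, (starRingEnd ℂ) (p n) * φ n y j
  have hu : ∀ j, ContDiff ℝ 1 (u j) := fun j => by
    have : ∀ n, ContDiff ℝ 1 (fun y => φ n y j) := fun n => contDiff_pi.1 (hφ1 n) j
    exact ContDiff.sum fun n _ => contDiff_const.mul (this n)
  have hud : ∀ j y, deriv (u j) y = ∑ n ∈ S, (starRingEnd ℂ) (p n) * deriv (φ n) y j := by
    intro j y
    apply HasDerivAt.deriv
    have := HasDerivAt.sum (u := S) fun n _ =>
      (deriv_comp_j ((hφ1 n).differentiable (by norm_num)) j y).const_mul ((starRingEnd ℂ) (p n))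
    convert! this using 1
    ext y; simp [u]
  have hup : ∀ j, Function.Periodic (u j) (2 * π) := fun j y => by
    simp only [u]; simp_rw [hper _ y]
  have hum : ∀ j, ∫ y in (0:ℝ)..(2 * π), u j y = 0 := fun j => by
    have hc : ∀ n, Continuous fun y => φ n y j := fun n => (continuous_apply j).comp (hφ1 n).continuous
    simp only [u]
    rw [intervalIntegral.integral_finsetSum
      (fun j _ => Continuous.intervalIntegrable (by fun_prop) _ _)]
    refine Finset.sum_eq_zero fun n _ => ?_
    rw [intervalIntegral.integral_const_mul, integral_comp_j (hφ1 n).continuous, hmean]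
    simp
  have hB : ∑ j, ∫ y in (0:ℝ)..(2 * π), ‖u j y‖ ^ 2 = ρ := by
    have := sq_expand S (fun n => (starRingEnd ℂ) (p n)) φ (fun n => (hφ1 n).continuous)
    have h2 : (∑ n ∈ S, ∑ m ∈ S, (starRingEnd ℂ) (p n) * (starRingEnd ℂ) ((starRingEnd ℂ) (p m)) *
        ∫ y in (0:ℝ)..(2 * π), ∑ j, φ n y j * (starRingEnd ℂ) (φ m y j)) = (ρ : ℂ) := by
      simp_rw [hortho]
      rw [hρ]
      push_cast
      refine Finset.sum_congr rfl fun n hn => ?_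
      simp [hn, Complex.conj_mul']
    rw [h2] at this
    exact_mod_cast this
  set Q := (∑ n ∈ S, ∑ m ∈ S, (starRingEnd ℂ) (p n) * p m *
      ((∫ y in (0:ℝ)..(2 * π), ∑ j, deriv (φ n) y j * (starRingEnd ℂ) (deriv (φ m) y j)) -
        δ * if n = m then 1 else 0)).re with hQ
  have hA : ∑ j, ∫ y in (0:ℝ)..(2 * π), ‖deriv (u j) y‖ ^ 2 = Q + δ * ρ := by
    have := sq_expand S (fun n => (starRingEnd ℂ) (p n)) (fun n => deriv (φ n))
      (fun n => (hφ1 n).continuous_deriv le_rfl)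
    simp_rw [← hud] at this
    have h2 : (∑ n ∈ S, ∑ m ∈ S, (starRingEnd ℂ) (p n) * p m *
      ((∫ y in (0:ℝ)..(2 * π), ∑ j, deriv (φ n) y j * (starRingEnd ℂ) (deriv (φ m) y j)) -
        δ * if n = m then 1 else 0)) = ((∑ j, ∫ y in (0:ℝ)..(2 * π), ‖deriv (u j) y‖ ^ 2 : ℝ) : ℂ)
          - δ * ρ := by
      rw [this, hρ]
      simp_rw [mul_sub, Finset.sum_sub_distrib]
      congr 1
      · simp
      · push_cast
        rw [Finset.mul_sum]
        refine Finset.sum_congr rfl fun n hn => ?_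
        rw [← Complex.conj_mul']
        simp [hn]
        ring
    rw [hQ, h2, ← Complex.ofReal_mul, ← Complex.ofReal_sub, Complex.ofReal_re]
    ring
  have hux : ρ ^ 2 ≤ ∑ j, ‖u j x‖ ^ 2 := by
    have h1 : (ρ : ℂ) = ∑ j, (starRingEnd ℂ) (e j) * u j x := by
      simp only [u, Finset.mul_sum]
      rw [Finset.sum_comm, hρ]
      push_cast
      refine Finset.sum_congr rfl fun n _ => ?_
      rw [← Complex.conj_mul', hp n, Finset.mul_sum]
      refine Finset.sum_congr rfl fun j _ => ?_
      ring
    have h2 : ρ ≤ ∑ j, ‖e j‖ * ‖u j x‖ := by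
      calc ρ = ‖(ρ : ℂ)‖ := by simp [abs_of_nonneg hρ0]
        _ ≤ _ := by
          rw [h1]
          refine (norm_sum_le _ _).trans (le_of_eq ?_)
          simp
    calc ρ ^ 2 ≤ (∑ j, ‖e j‖ * ‖u j x‖) ^ 2 := pow_le_pow_left₀ hρ0 h2 2
      _ ≤ (∑ j, ‖e j‖ ^ 2) * ∑ j, ‖u j x‖ ^ 2 := Finset.sum_mul_sq_le_sq_mul_sq _ _ _
      _ = _ := by rw [he, one_mul]
  have hmain : ∀ s : ℝ, 0 < s → ρ ^ 2 ≤ K2 δ / 2 * (Q / s + s * ρ) := by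
    intro s hs
    refine hux.trans ((Finset.sum_le_sum fun j _ =>
      scalar_interp hδ0 hδ1 (hu j) (hup j) (hum j) x s hs).trans (le_of_eq ?_))
    rw [← Finset.mul_sum, Finset.sum_add_distrib, ← Finset.sum_div, Finset.sum_sub_distrib,
      ← Finset.mul_sum, ← Finset.mul_sum, hA, hB]
    ring
  rcases hρ0.eq_or_lt with h0 | h0
  · have := hmain 1 one_pos
    rw [← h0] at this ⊢
    have h3 : 0 ≤ K2 δ * Q := by linarith
    have := nonneg_of_mul_nonneg_right h3 hK
    have : 0 ≤ K2 δ ^ 2 * Q := by positivity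
    simpa using this
  · have := hmain (ρ / K2 δ) (by positivity)
    have e2 : K2 δ / 2 * (Q / (ρ / K2 δ) + ρ / K2 δ * ρ) = (K2 δ ^ 2 * Q) / (2 * ρ) + ρ ^ 2 / 2 := by
      field_simp
    rw [e2] at this
    have h4 : ρ ^ 2 / 2 ≤ (K2 δ ^ 2 * Q) / (2 * ρ) := by linarith
    rw [le_div_iff₀ (by positivity)] at h4
    nlinarith

lemma spec_norm {M : ℕ} {A : Matrix (Fin M) (Fin M) ℂ} (hA : A.IsHermitian) (i : Fin M) :
    ∑ j, ‖(hA.eigenvectorUnitary : Matrix (Fin M) (Fin M) ℂ) j i‖ ^ 2 = 1 := by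
  have h : star (hA.eigenvectorUnitary : Matrix (Fin M) (Fin M) ℂ) *
    (hA.eigenvectorUnitary : Matrix (Fin M) (Fin M) ℂ) = 1 := Unitary.coe_star_mul_self _
  have h1 := congrFun (congrFun h i) i
  rw [Matrix.mul_apply, Matrix.one_apply_eq] at h1
  have : ((∑ j, ‖(hA.eigenvectorUnitary : Matrix (Fin M) (Fin M) ℂ) j i‖ ^ 2 : ℝ) : ℂ) = 1 := by
    rw [← h1]
    push_cast
    refine Finset.sum_congr rfl fun j _ => ?_
    rw [← Complex.conj_mul', Matrix.star_apply]
    rfl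
  exact_mod_cast this

lemma spec_pair {M : ℕ} {A : Matrix (Fin M) (Fin M) ℂ} (hA : A.IsHermitian) (w z : Fin M → ℂ) :
    ∑ i, (starRingEnd ℂ) (∑ j, (starRingEnd ℂ) ((hA.eigenvectorUnitary : Matrix (Fin M) (Fin M) ℂ) j i) * w j)
      * (∑ j, (starRingEnd ℂ) ((hA.eigenvectorUnitary : Matrix (Fin M) (Fin M) ℂ) j i) * z j) =
    ∑ j, (starRingEnd ℂ) (w j) * z j := by
  have h : (hA.eigenvectorUnitary : Matrix (Fin M) (Fin M) ℂ) *
    star (hA.eigenvectorUnitary : Matrix (Fin M) (Fin M) ℂ) = 1 := Unitary.coe_mul_star_self _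
  set U := (hA.eigenvectorUnitary : Matrix (Fin M) (Fin M) ℂ)
  change star ((star U).mulVec w) ⬝ᵥ ((star U).mulVec z) = star w ⬝ᵥ z
  rw [Matrix.star_mulVec, Matrix.dotProduct_mulVec, Matrix.vecMul_vecMul]
  rw [Matrix.star_eq_conjTranspose, Matrix.conjTranspose_conjTranspose,
    ← Matrix.star_eq_conjTranspose, h, Matrix.vecMul_one]

lemma spec_quad {M : ℕ} {A : Matrix (Fin M) (Fin M) ℂ} (hA : A.IsHermitian) (w : Fin M → ℂ) :
    ∑ i, ((hA.eigenvalues i : ℝ) : ℂ) * ((starRingEnd ℂ) (∑ j, (starRingEnd ℂ)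
      ((hA.eigenvectorUnitary : Matrix (Fin M) (Fin M) ℂ) j i) * w j)
      * (∑ j, (starRingEnd ℂ) ((hA.eigenvectorUnitary : Matrix (Fin M) (Fin M) ℂ) j i) * w j)) =
    ∑ j, A.mulVec w j * (starRingEnd ℂ) (w j) := by
  have h : A = (hA.eigenvectorUnitary : Matrix (Fin M) (Fin M) ℂ) *
      Matrix.diagonal (fun i => ((hA.eigenvalues i : ℝ) : ℂ)) *
      star (hA.eigenvectorUnitary : Matrix (Fin M) (Fin M) ℂ) := by
    conv_lhs => rw [hA.spectral_theorem]
    rfl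
  set U := (hA.eigenvectorUnitary : Matrix (Fin M) (Fin M) ℂ)
  set D := Matrix.diagonal (fun i => ((hA.eigenvalues i : ℝ) : ℂ)) with hD
  have h1 : A.mulVec w ⬝ᵥ star w = star ((star U).mulVec w) ⬝ᵥ (D.mulVec ((star U).mulVec w)) := by
    rw [dotProduct_comm]
    conv_lhs => rw [h]
    rw [Matrix.star_mulVec, ← Matrix.dotProduct_mulVec]
    rw [Matrix.star_eq_conjTranspose, Matrix.conjTranspose_conjTranspose]
    rw [Matrix.mulVec_mulVec, Matrix.mulVec_mulVec, Matrix.mul_assoc]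
  have h2 : ∀ i, D.mulVec ((star U).mulVec w) i = ((hA.eigenvalues i : ℝ) : ℂ) * (star U).mulVec w i := by
    intro i
    rw [hD, Matrix.mulVec_diagonal]
  change _ = A.mulVec w ⬝ᵥ star w
  rw [h1, dotProduct]
  refine Finset.sum_congr rfl fun i _ => ?_
  rw [h2]
  change ((hA.eigenvalues i : ℝ) : ℂ) * (star ((star U).mulVec w i) * (star U).mulVec w i) =
    star ((star U).mulVec w i) * _
  ring

lemma young_scalar (w ρ K : ℝ) (hρ : 0 ≤ ρ) (hK : 0 < K) :
    w * ρ - ρ ^ 3 / K ^ 2 ≤ (2 * K / (3 * √3)) * (max w 0) ^ (3 / 2 : ℝ) := by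
  rcases le_total w 0 with hw | hw
  · rw [max_eq_right hw, Real.zero_rpow (by norm_num), mul_zero]
    have : w * ρ ≤ 0 := mul_nonpos_of_nonpos_of_nonneg hw hρ
    have : 0 ≤ ρ ^ 3 / K ^ 2 := by positivity
    linarith
  · rw [max_eq_left hw]
    set r := √w with hr
    have hr0 : 0 ≤ r := Real.sqrt_nonneg _
    have hwr : w = r ^ 2 := (Real.sq_sqrt hw).symm
    have e1 : w ^ (3 / 2 : ℝ) = r ^ 3 := by
      rw [hwr, ← Real.rpow_natCast r 2, ← Real.rpow_mul hr0, ← Real.rpow_natCast r 3]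
      norm_num
    rw [e1, hwr]
    set q := √3 with hq
    have hq0 : 0 < q := Real.sqrt_pos.2 (by norm_num)
    have hq3 : q ^ 2 = 3 := Real.sq_sqrt (by norm_num)
    -- t = K r / q
    obtain ⟨t, ht⟩ : ∃ t, t = K * r / q := ⟨_, rfl⟩
    have ht0 : 0 ≤ t := by rw [ht]; positivity
    have hrt : r = q * t / K := by rw [ht]; field_simp
    rw [hrt]
    have e2 : (2 * K / (3 * q)) * (q * t / K) ^ 3 = 2 * t ^ 3 / K ^ 2 := by
      field_simp
      rw [hq3]
    have e3 : (q * t / K) ^ 2 * ρ = 3 * t ^ 2 * ρ / K ^ 2 := by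
      rw [div_pow, mul_pow, hq3]; ring
    rw [e2, e3, ← sub_div]
    apply div_le_div_of_nonneg_right _ (by positivity)
    nlinarith [mul_nonneg (sq_nonneg (ρ - t)) (by positivity : 0 ≤ ρ + 2 * t)]

lemma ibp_energy {M : ℕ} {g : ℝ → Fin M → ℂ} (hg : ContDiff ℝ 2 g)
    (hp : Function.Periodic g (2 * π)) :
    ∫ y in (0:ℝ)..(2 * π), ∑ j, deriv (deriv g) y j * (starRingEnd ℂ) (g y j) =
    - ∫ y in (0:ℝ)..(2 * π), ∑ j, deriv g y j * (starRingEnd ℂ) (deriv g y j) := by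
  have hg1 : ContDiff ℝ 1 (deriv g) := hg.deriv' 
  have hc := hg.continuous
  have hc1 := hg1.continuous
  have hc2 := hg1.continuous_deriv le_rfl
  have hcj : ∀ j, Continuous fun y => g y j := fun j => (continuous_apply j).comp hc
  have hcj1 : ∀ j, Continuous fun y => deriv g y j := fun j => (continuous_apply j).comp hc1
  have hcj2 : ∀ j, Continuous fun y => deriv (deriv g) y j := fun j => (continuous_apply j).comp hc2
  have hd : ∀ y, HasDerivAt (fun y => ∑ j, deriv g y j * (starRingEnd ℂ) (g y j))
      ((∑ j, deriv (deriv g) y j * (starRingEnd ℂ) (g y j)) +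
        ∑ j, deriv g y j * (starRingEnd ℂ) (deriv g y j)) y := by
    intro y
    rw [← Finset.sum_add_distrib]
    have := HasDerivAt.sum (u := Finset.univ) fun j _ =>
      (deriv_comp_j (hg1.differentiable (by norm_num)) j y).mul
        (deriv_comp_j (hg.differentiable (by norm_num)) j y).star
    convert! this using 1
    ext y; simp
  have hi := intervalIntegral.integral_eq_sub_of_hasDerivAt (a := 0) (b := 2 * π)
    (fun x _ => hd x) (Continuous.intervalIntegrable (by fun_prop) _ _)
  rw [intervalIntegral.integral_add (Continuous.intervalIntegrable (by fun_prop) _ _)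
    (Continuous.intervalIntegrable (by fun_prop) _ _)] at hi
  have e0 : g (2 * π) = g 0 := by simpa using hp 0
  have e1 : deriv g (2 * π) = deriv g 0 := by simpa using periodic_deriv' hp 0
  rw [e0, e1, sub_self] at hi
  exact eq_neg_of_add_eq_zero_left hi

lemma energy_eq {δ μ : ℝ} {M : ℕ} {V : ℝ → Matrix (Fin M) (Fin M) ℂ} (hVc : Continuous V)
    {g : ℝ → Fin M → ℂ} (hg : ContDiff ℝ 2 g)
    (hp : Function.Periodic g (2 * π)) (hm : (∫ t in (0:ℝ)..(2 * π), g t) = 0)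
    (h1 : (∫ x in (0:ℝ)..(2 * π), ∑ j, g x j * (starRingEnd ℂ) (g x j)) = 1)
    (heig : ∀ x, -(deriv (deriv g) x) - δ • g x -
        projP (fun t => (V t).mulVec (projP g t)) x = (-μ) • g x) :
    (∫ y in (0:ℝ)..(2 * π), ∑ j, deriv g y j * (starRingEnd ℂ) (deriv g y j)) - δ =
      (∫ x in (0:ℝ)..(2 * π), ∑ j, (V x).mulVec (g x) j * (starRingEnd ℂ) (g x j)) - μ := by
  have hg1 : ContDiff ℝ 1 (deriv g) := hg.deriv' 
  have hc := hg.continuous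
  have hc2 := hg1.continuous_deriv le_rfl
  have hcj : ∀ j, Continuous fun y => g y j := fun j => (continuous_apply j).comp hc
  have hcj2 : ∀ j, Continuous fun y => deriv (deriv g) y j := fun j => (continuous_apply j).comp hc2
  have hVg : Continuous fun x => (V x).mulVec (g x) := hVc.matrix_mulVec hc
  have hVgj : ∀ j, Continuous fun x => (V x).mulVec (g x) j := fun j => (continuous_apply j).comp hVg
  have hP : projP g = g := by
    ext1 x; simp [projP, hm]
  rw [hP] at heig
  set c : Fin M → ℂ := (1 / (2 * π)) • ∫ t in (0:ℝ)..(2 * π), (V t).mulVec (g t) with hcdef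
  have hpt : ∀ x, ∑ j, deriv (deriv g) x j * (starRingEnd ℂ) (g x j) =
      (μ - δ) * (∑ j, g x j * (starRingEnd ℂ) (g x j)) -
      (∑ j, (V x).mulVec (g x) j * (starRingEnd ℂ) (g x j)) + ∑ j, c j * (starRingEnd ℂ) (g x j) := by
    intro x
    rw [Finset.mul_sum, ← Finset.sum_sub_distrib, ← Finset.sum_add_distrib]
    refine Finset.sum_congr rfl fun j _ => ?_
    have := congrFun (heig x) j
    simp only [projP, ← hcdef, Pi.sub_apply, Pi.neg_apply, Pi.smul_apply, Complex.real_smul,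
      Complex.ofReal_neg] at this
    linear_combination (-(starRingEnd ℂ) (g x j)) * this
  have hI := ibp_energy hg hp
  simp_rw [hpt] at hI
  rw [intervalIntegral.integral_add (Continuous.intervalIntegrable (by fun_prop) _ _)
    (Continuous.intervalIntegrable (by fun_prop) _ _),
    intervalIntegral.integral_sub (Continuous.intervalIntegrable (by fun_prop) _ _)
    (Continuous.intervalIntegrable (by fun_prop) _ _), intervalIntegral.integral_const_mul, h1]
    at hI
  have hz : ∀ j, ∫ y in (0:ℝ)..(2 * π), c j * (starRingEnd ℂ) (g y j) = 0 := by
    intro j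
    rw [intervalIntegral.integral_const_mul]
    have : ∫ y in (0:ℝ)..(2 * π), (starRingEnd ℂ) (g y j) =
        (starRingEnd ℂ) (∫ y in (0:ℝ)..(2 * π), g y j) := by
      simp only [intervalIntegral, map_sub, integral_conj]
    rw [this, integral_comp_j hc, hm]
    simp
  have hz2 : ∫ y in (0:ℝ)..(2 * π), ∑ j, c j * (starRingEnd ℂ) (g y j) = 0 := by
    rw [intervalIntegral.integral_finsetSum
      (fun j _ => Continuous.intervalIntegrable (by fun_prop) _ _), Finset.sum_eq_zero fun j _ => hz j]
  rw [hz2] at hI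
  linear_combination hI

lemma key_ineq {δ : ℝ} (hδ0 : 0 ≤ δ) (hδ1 : δ < 1) {M N : ℕ}
    (V : ℝ → Matrix (Fin M) (Fin M) ℂ) (hVc : Continuous V) (hV : ∀ x, (V x).IsHermitian)
    (φ : Fin N → ℝ → Fin M → ℂ) (hφ : ∀ n, ContDiff ℝ 2 (φ n))
    (hper : ∀ n, Function.Periodic (φ n) (2 * π))
    (hmean : ∀ n, (∫ t in (0:ℝ)..(2 * π), φ n t) = 0)
    (hortho : ∀ n m, (∫ x in (0:ℝ)..(2 * π), ∑ j, φ n x j * (starRingEnd ℂ) (φ m x j)) =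
      if n = m then 1 else 0)
    (μ : Fin N → ℝ)
    (heig : ∀ n x, -(deriv (deriv (φ n)) x) - δ • φ n x -
        projP (fun t => (V t).mulVec (projP (φ n) t)) x = (-(μ n)) • φ n x)
    (S : Finset (Fin N)) (τ : ℝ) :
    ∑ n ∈ S, (μ n - τ) ≤ (2 * K2 δ / (3 * √3)) *
      ∫ x in (0:ℝ)..(2 * π), ∑ i, (max ((hV x).eigenvalues i - τ) 0) ^ (3 / 2 : ℝ) := by
  have hK := k2_pos hδ0 hδ1
  have hc := fun n => (hφ n).continuous
  have hcj : ∀ n j, Continuous fun y => φ n y j := fun n j => (continuous_apply j).comp (hc n)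
  have hVg : ∀ n, Continuous fun x => (V x).mulVec (φ n x) := fun n => hVc.matrix_mulVec (hc n)
  have hVgj : ∀ n j, Continuous fun x => (V x).mulVec (φ n x) j :=
    fun n j => (continuous_apply j).comp (hVg n)
  let a : Fin N → Fin N → ℂ := fun n m =>
    (∫ y in (0:ℝ)..(2 * π), ∑ j, deriv (φ n) y j * (starRingEnd ℂ) (deriv (φ m) y j)) -
        δ * if n = m then 1 else 0
  have ha : ∀ n, a n n = (∫ x in (0:ℝ)..(2 * π), ∑ j, (V x).mulVec (φ n x) j *
      (starRingEnd ℂ) (φ n x j)) - μ n := by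
    intro n
    have := energy_eq hVc (hφ n) (hper n) (hmean n) (by simpa using hortho n n) (heig n)
    simpa [a] using this
  let D : ℝ → ℂ := fun x => (∑ n ∈ S, ∑ j, (V x).mulVec (φ n x) j * (starRingEnd ℂ) (φ n x j))
    - τ * (∑ n ∈ S, ∑ j, φ n x j * (starRingEnd ℂ) (φ n x j))
    - ∑ n ∈ S, ∑ m ∈ S, a n m * ∑ j, φ m x j * (starRingEnd ℂ) (φ n x j)
  have hDc : Continuous D := by fun_prop
  have hDint : ∫ x in (0:ℝ)..(2 * π), D x = ((∑ n ∈ S, (μ n - τ) : ℝ) : ℂ) := by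
    have i1 : ∫ x in (0:ℝ)..(2 * π), (∑ n ∈ S, ∑ m ∈ S, a n m * ∑ j, φ m x j * (starRingEnd ℂ) (φ n x j))
        = ∑ n ∈ S, a n n := by
      rw [intervalIntegral.integral_finsetSum
        (fun j _ => Continuous.intervalIntegrable (by fun_prop) _ _)]
      refine Finset.sum_congr rfl fun n hn => ?_
      rw [intervalIntegral.integral_finsetSum
        (fun j _ => Continuous.intervalIntegrable (by fun_prop) _ _)]
      simp_rw [intervalIntegral.integral_const_mul, hortho]
      simp [hn]
    have i2 : ∫ x in (0:ℝ)..(2 * π), (∑ n ∈ S, ∑ j, φ n x j * (starRingEnd ℂ) (φ n x j)) =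
        ∑ n ∈ S, 1 := by
      rw [intervalIntegral.integral_finsetSum
        (fun j _ => Continuous.intervalIntegrable (by fun_prop) _ _)]
      simp_rw [hortho]; simp
    simp only [D]
    rw [intervalIntegral.integral_sub (Continuous.intervalIntegrable (by fun_prop) _ _)
      (Continuous.intervalIntegrable (by fun_prop) _ _),
      intervalIntegral.integral_sub (Continuous.intervalIntegrable (by fun_prop) _ _)
      (Continuous.intervalIntegrable (by fun_prop) _ _), intervalIntegral.integral_const_mul, i1, i2,
      intervalIntegral.integral_finsetSum
        (fun j _ => Continuous.intervalIntegrable (by fun_prop) _ _), Finset.mul_sum,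
      ← Finset.sum_sub_distrib, ← Finset.sum_sub_distrib]
    push_cast
    refine Finset.sum_congr rfl fun n _ => ?_
    rw [ha]; ring
  have hDre : ∫ x in (0:ℝ)..(2 * π), (D x).re = ∑ n ∈ S, (μ n - τ) := by
    have := Complex.reCLM.intervalIntegral_comp_comm (hDc.intervalIntegrable (μ := volume) 0 (2 * π))
    rw [hDint] at this
    simpa using this
  have hpt : ∀ x, (D x).re ≤ (2 * K2 δ / (3 * √3)) *
      ∑ i, (max ((hV x).eigenvalues i - τ) 0) ^ (3 / 2 : ℝ) := by
    intro x
    let p : Fin M → Fin N → ℂ := fun i n => ∑ j, (starRingEnd ℂ)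
      (((hV x).eigenvectorUnitary : Matrix (Fin M) (Fin M) ℂ) j i) * φ n x j
    let Q : Fin M → ℂ := fun i => ∑ n ∈ S, ∑ m ∈ S, (starRingEnd ℂ) (p i n) * p i m * a n m
    have hEF : ∀ i, (∑ n ∈ S, ‖p i n‖ ^ 2) ^ 3 ≤ K2 δ ^ 2 * (Q i).re := fun i =>
      eden_foias hδ0 hδ1 φ hφ hper hmean hortho S (p i) x
        (fun j => ((hV x).eigenvectorUnitary : Matrix (Fin M) (Fin M) ℂ) j i)
        (spec_norm (hV x) i) (fun n => rfl)
    have hDeq : D x = ∑ i, ((((hV x).eigenvalues i - τ) * ∑ n ∈ S, ‖p i n‖ ^ 2 : ℝ) - Q i) := by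
      rw [Finset.sum_sub_distrib]
      simp only [D, Q]
      congr 1
      · have e1 : ∀ n, ∑ j, (V x).mulVec (φ n x) j * (starRingEnd ℂ) (φ n x j) =
            ∑ i, (((hV x).eigenvalues i : ℝ) : ℂ) * (((‖p i n‖ ^ 2 : ℝ)) : ℂ) := by
          intro n
          rw [← spec_quad (hV x)]
          refine Finset.sum_congr rfl fun i _ => ?_
          push_cast
          rw [← Complex.conj_mul']
        have e2 : ∀ n, ∑ j, φ n x j * (starRingEnd ℂ) (φ n x j) =
            ∑ i, (((‖p i n‖ ^ 2 : ℝ)) : ℂ) := by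
          intro n
          simp_rw [mul_comm (φ n x _)]
          rw [← spec_pair (hV x)]
          refine Finset.sum_congr rfl fun i _ => ?_
          push_cast
          rw [← Complex.conj_mul']
        simp_rw [e1, e2]
        rw [Finset.sum_comm, Finset.sum_comm (s := S), Finset.mul_sum, ← Finset.sum_sub_distrib]
        refine Finset.sum_congr rfl fun i _ => ?_
        rw [← Finset.mul_sum]
        push_cast
        ring
      · rw [Finset.sum_comm]
        rw [Finset.sum_comm (s := Finset.univ)]
        rw [Finset.sum_comm]
        refine Finset.sum_congr rfl fun n _ => ?_
        rw [Finset.sum_comm]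
        refine Finset.sum_congr rfl fun m _ => ?_
        simp_rw [mul_comm (φ m x _)]
        rw [← spec_pair (hV x), mul_comm, Finset.sum_mul]
    rw [hDeq, Complex.re_sum, Finset.mul_sum]
    refine Finset.sum_le_sum fun i _ => ?_
    rw [Complex.sub_re, Complex.ofReal_re]
    refine le_trans ?_ (young_scalar _ (∑ n ∈ S, ‖p i n‖ ^ 2) _
      (Finset.sum_nonneg fun _ _ => sq_nonneg _) hK)
    have : (∑ n ∈ S, ‖p i n‖ ^ 2) ^ 3 / K2 δ ^ 2 ≤ (Q i).re := by
      rw [div_le_iff₀ (by positivity)]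
      linarith [hEF i]
    linarith
  rw [← hDre, ← intervalIntegral.integral_const_mul]
  have hGc : Continuous fun x => ∑ i, (max ((hV x).eigenvalues i - τ) 0) ^ (3 / 2 : ℝ) :=
    continuous_sum_eig hVc hV (f := fun t => (max (t - τ) 0) ^ (3 / 2 : ℝ))
      (Continuous.rpow_const (by fun_prop) fun _ => Or.inr (by norm_num))
  apply intervalIntegral.integral_mono_on (by positivity)
    (Continuous.intervalIntegrable (by fun_prop) _ _)
    (Continuous.intervalIntegrable (by fun_prop) _ _)
  intro x _
  exact hpt x

lemma beta_scale {α b v : ℝ} (hα : 0 < α) (hb : 0 < b) (hv : 0 ≤ v) :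
    ∫⁻ τ in Set.Ioi (0 : ℝ), ENNReal.ofReal (τ ^ (α - 1) * (max (v - τ) 0) ^ b) =
      ENNReal.ofReal (ProbabilityTheory.beta α (b + 1) * v ^ (α + b)) := by
  rcases hv.eq_or_lt with rfl | hv
  · rw [Real.zero_rpow (by linarith), mul_zero, ENNReal.ofReal_zero]
    rw [setLIntegral_congr_fun (g := fun _ => 0) measurableSet_Ioi]
    · simp
    · intro τ hτ
      have : max (0 - τ) 0 = 0 := max_eq_right (by simp at hτ ⊢; exact hτ.le)
      simp only [this, Real.zero_rpow hb.ne', mul_zero, ENNReal.ofReal_zero]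
  · set f : ℝ → ENNReal := (Set.Ioi (0 : ℝ)).indicator
      fun τ => ENNReal.ofReal (τ ^ (α - 1) * (max (v - τ) 0) ^ b) with hf
    have hfm : Measurable f := by
      apply Measurable.indicator _ measurableSet_Ioi
      fun_prop
    have hβ := ProbabilityTheory.beta_pos hα (by linarith : 0 < b + 1)
    rw [← lintegral_indicator measurableSet_Ioi]
    change ∫⁻ τ, f τ = _
    have h1 : ∫⁻ t, f (v * t) = ENNReal.ofReal |v⁻¹| * ∫⁻ τ, f τ := by
      rw [← lintegral_map hfm (measurable_const_mul v), Real.map_volume_mul_left hv.ne',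
        lintegral_smul_measure, smul_eq_mul]
    have h2 : ∀ t, f (v * t) = ENNReal.ofReal (ProbabilityTheory.beta α (b + 1) * v ^ (α - 1 + b)) *
        ProbabilityTheory.betaPDF α (b + 1) t := by
      intro t
      rcases le_or_gt t 0 with ht | ht
      · rw [ProbabilityTheory.betaPDF_eq_zero_of_nonpos ht, mul_zero, hf, Set.indicator_of_notMem]
        simp; nlinarith
      rcases lt_or_ge t 1 with ht1 | ht1
      · rw [ProbabilityTheory.betaPDF_of_pos_lt_one ht ht1, hf, Set.indicator_of_mem (by simp; positivity),
          ← ENNReal.ofReal_mul (by positivity)]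
        congr 1
        have : max (v - v * t) 0 = v * (1 - t) := by rw [max_eq_left (by nlinarith)]; ring
        rw [this, Real.mul_rpow hv.le ht.le, Real.mul_rpow hv.le (by linarith), Real.rpow_add hv,
          add_sub_cancel_right]
        field_simp
      · rw [ProbabilityTheory.betaPDF_eq_zero_of_one_le ht1, mul_zero, hf,
          Set.indicator_of_mem (by simp; positivity)]
        have : max (v - v * t) 0 = 0 := max_eq_right (by nlinarith)
        rw [this, Real.zero_rpow hb.ne', mul_zero, ENNReal.ofReal_zero]
    simp_rw [h2] at h1
    rw [lintegral_const_mul' _ _ ENNReal.ofReal_ne_top,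
      ProbabilityTheory.lintegral_betaPDF_eq_one hα (by linarith), mul_one] at h1
    have h3 : ENNReal.ofReal v * (ENNReal.ofReal |v⁻¹| * ∫⁻ τ, f τ) = ∫⁻ τ, f τ := by
      rw [← mul_assoc, ← ENNReal.ofReal_mul hv.le, abs_of_pos (inv_pos.2 hv), mul_inv_cancel₀ hv.ne']
      simp
    rw [← h3, ← h1, ← ENNReal.ofReal_mul hv.le]
    congr 1
    have : α + b = 1 + (α - 1 + b) := by ring
    rw [this, Real.rpow_add hv 1, Real.rpow_one]
    ring

lemma gamma_five_half : Real.Gamma (5 / 2) = 3 / 4 * √π := by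
  have h1 : (5 / 2 : ℝ) = 1 / 2 + 1 + 1 := by norm_num
  rw [h1, Real.Gamma_add_one (by norm_num), Real.Gamma_add_one (by norm_num), Real.Gamma_one_half_eq]
  ring

lemma lift_ineq {M N : ℕ} (V : ℝ → Matrix (Fin M) (Fin M) ℂ) (hVc : Continuous V)
    (hV : ∀ x, (V x).PosSemidef) (μ : Fin N → ℝ) (hμ : ∀ n, 0 < μ n) {C γ : ℝ} (hC : 0 ≤ C)
    (hγ : 1 < γ)
    (h : ∀ (S : Finset (Fin N)) (τ : ℝ), ∑ n ∈ S, (μ n - τ) ≤ C *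
      ∫ x in (0:ℝ)..(2 * π), ∑ i, (max ((hV x).1.eigenvalues i - τ) 0) ^ (3 / 2 : ℝ)) :
    ProbabilityTheory.beta (γ - 1) 2 * ∑ n, μ n ^ γ ≤ C * ProbabilityTheory.beta (γ - 1) (5 / 2) *
      ∫ x in (0:ℝ)..(2 * π), ∑ i, (hV x).1.eigenvalues i ^ (γ + 1 / 2) := by
  have hα : 0 < γ - 1 := by linarith
  have hb1 := ProbabilityTheory.beta_pos hα (by norm_num : (0:ℝ) < 2)
  have hb2 := ProbabilityTheory.beta_pos hα (by norm_num : (0:ℝ) < 5 / 2)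
  have hev : ∀ x i, 0 ≤ (hV x).1.eigenvalues i := fun x i => (hV x).eigenvalues_nonneg i
  have h2pi : (0:ℝ) ≤ 2 * π := by positivity
  let G : ℝ → ℝ → ℝ := fun τ x => ∑ i, (max ((hV x).1.eigenvalues i - τ) 0) ^ (3 / 2 : ℝ)
  have hG0 : ∀ τ x, 0 ≤ G τ x := fun τ x => Finset.sum_nonneg fun i _ => by positivity
  have hGx : ∀ τ, Continuous (G τ) := fun τ =>
    continuous_sum_eig hVc (fun x => (hV x).1) (f := fun t => (max (t - τ) 0) ^ (3 / 2 : ℝ))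
      (Continuous.rpow_const (by fun_prop) fun _ => Or.inr (by norm_num))
  have hGτ : ∀ x, Continuous fun τ => G τ x := fun x =>
    continuous_finsetSum _ fun i _ =>
      (Continuous.rpow_const (by fun_prop) fun _ => Or.inr (by norm_num))
  have hGm : Measurable (Function.uncurry G) :=
    measurable_uncurry_of_continuous_of_measurable hGτ fun τ => (hGx τ).measurable
  have hEc : Continuous fun x => ∑ i, (hV x).1.eigenvalues i ^ (γ + 1 / 2) :=
    continuous_sum_eig hVc (fun x => (hV x).1) (f := fun t => t ^ (γ + 1 / 2))
      (Continuous.rpow_const (by fun_prop) fun _ => Or.inr (by linarith))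
  have hτ : ∀ τ ∈ Set.Ioi (0 : ℝ), ∑ n, ENNReal.ofReal (τ ^ (γ - 1 - 1) * (max (μ n - τ) 0) ^ (1 : ℝ)) ≤
      ENNReal.ofReal C * ∫⁻ x in Set.Ioc 0 (2 * π), ENNReal.ofReal (τ ^ (γ - 1 - 1) * G τ x) := by
    intro τ hτ
    have hτ : 0 < τ := hτ
    have h1 := h (Finset.univ.filter fun n => τ < μ n) τ
    have h2 : ∑ n ∈ Finset.univ.filter (fun n => τ < μ n), (μ n - τ) = ∑ n, max (μ n - τ) 0 := by
      rw [Finset.sum_filter]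
      refine Finset.sum_congr rfl fun n _ => ?_
      split_ifs with hh
      · rw [max_eq_left (by linarith)]
      · rw [max_eq_right (by linarith)]
    rw [h2, intervalIntegral.integral_of_le h2pi] at h1
    rw [← ENNReal.ofReal_sum_of_nonneg (fun n _ => by positivity), ← ofReal_integral_eq_lintegral_ofReal,
      ← ENNReal.ofReal_mul hC]
    · apply ENNReal.ofReal_le_ofReal
      rw [integral_const_mul, ← Finset.mul_sum]
      simp_rw [Real.rpow_one]
      have := mul_le_mul_of_nonneg_left h1 (Real.rpow_nonneg hτ.le (γ - 1 - 1))
      refine this.trans (le_of_eq ?_)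
      simp only [G]
      ring
    · exact (((hGx τ).const_mul _ (M := ℝ)).integrableOn_Ioc)
    · exact Filter.Eventually.of_forall fun x => mul_nonneg (by positivity) (hG0 _ _)
  have hint := setLIntegral_mono' (μ := volume) measurableSet_Ioi hτ
  rw [lintegral_finsetSum _ (fun n _ => by fun_prop), lintegral_const_mul' _ _ ENNReal.ofReal_ne_top,
    lintegral_lintegral_swap] at hint
  swap
  · apply Measurable.aemeasurable
    apply ENNReal.measurable_ofReal.comp
    exact (measurable_fst.pow_const _).mul hGm
  have hin : ∀ x, ∫⁻ τ in Set.Ioi (0 : ℝ), ENNReal.ofReal (τ ^ (γ - 1 - 1) * G τ x) =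
      ENNReal.ofReal (ProbabilityTheory.beta (γ - 1) (5 / 2) *
        ∑ i, (hV x).1.eigenvalues i ^ (γ + 1 / 2)) := by
    intro x
    have e1 : ∀ τ ∈ Set.Ioi (0 : ℝ), ENNReal.ofReal (τ ^ (γ - 1 - 1) * G τ x) =
        ∑ i, ENNReal.ofReal (τ ^ (γ - 1 - 1) * (max ((hV x).1.eigenvalues i - τ) 0) ^ (3 / 2 : ℝ)) := by
      intro τ hτ
      have hτ : 0 < τ := hτ
      rw [← ENNReal.ofReal_sum_of_nonneg (fun n _ => by positivity), ← Finset.mul_sum]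
    rw [setLIntegral_congr_fun measurableSet_Ioi e1, lintegral_finsetSum _ (fun n _ => by fun_prop)]
    rw [Finset.sum_congr rfl fun i _ => beta_scale hα (by norm_num) (hev x i)]
    have e2 : (3 / 2 + 1 : ℝ) = 5 / 2 := by norm_num
    have e3 : γ - 1 + 3 / 2 = γ + 1 / 2 := by ring
    rw [e2, e3, ← ENNReal.ofReal_sum_of_nonneg, Finset.mul_sum]
    exact fun i _ => mul_nonneg hb2.le (Real.rpow_nonneg (hev x i) _)
  simp_rw [hin] at hint
  rw [Finset.sum_congr rfl fun n _ => beta_scale hα one_pos (hμ n).le,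
    ← ENNReal.ofReal_sum_of_nonneg, ← ofReal_integral_eq_lintegral_ofReal,
    ← ENNReal.ofReal_mul hC, ENNReal.ofReal_le_ofReal_iff, integral_const_mul, ← Finset.mul_sum,
    ← intervalIntegral.integral_of_le h2pi] at hint
  · have e2 : (1 + 1 : ℝ) = 2 := by norm_num
    rw [e2, sub_add_cancel, ← mul_assoc] at hint
    exact hint
  · apply mul_nonneg hC
    apply integral_nonneg
    intro x
    exact mul_nonneg hb2.le (Finset.sum_nonneg fun i _ => Real.rpow_nonneg (hev x i) _)
  · exact ((hEc.const_mul _ (M := ℝ)).integrableOn_Ioc)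
  · exact Filter.Eventually.of_forall fun x =>
      mul_nonneg hb2.le (Finset.sum_nonneg fun i _ => Real.rpow_nonneg (hev x i) _)
  · exact fun n _ => mul_nonneg (by norm_num; exact hb1.le) (Real.rpow_nonneg (hμ n).le _)

theorem stmt_16 (δ : ℝ) (hδ0 : 0 ≤ δ) (hδ1 : δ < 1)
    (γ : ℝ) (hγ : 1 ≤ γ) (M N : ℕ) (hM : 1 ≤ M)
    (V : ℝ → Matrix (Fin M) (Fin M) ℂ) (hVc : Continuous V)
    (hVper : Function.Periodic V (2 * π)) (hV : ∀ x, (V x).PosSemidef)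
    (φ : Fin N → ℝ → Fin M → ℂ) (hφ : ∀ n, ContDiff ℝ 2 (φ n))
    (hper : ∀ n, Function.Periodic (φ n) (2 * π))
    (hmean : ∀ n, (∫ t in (0:ℝ)..(2 * π), φ n t) = 0)
    (hortho : ∀ n m, (∫ x in (0:ℝ)..(2 * π), ∑ j, φ n x j * (starRingEnd ℂ) (φ m x j)) =
      if n = m then 1 else 0)
    (μ : Fin N → ℝ) (hμ : ∀ n, 0 < μ n)
    (heig : ∀ n x, -(deriv (deriv (φ n)) x) - δ • φ n x -
        projP (fun t => (V t).mulVec (projP (φ n) t)) x = (-(μ n)) • φ n x) :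
    ∑ n, μ n ^ γ ≤ (π / Real.sqrt 3) * K2 δ *
      (Real.Gamma (γ + 1) / (2 * Real.sqrt π * Real.Gamma (γ + 3 / 2))) *
      ∫ x in (0:ℝ)..(2 * π), ∑ i, (hV x).1.eigenvalues i ^ (γ + 1 / 2) := by
  have hK := k2_pos hδ0 hδ1
  have hkey := key_ineq hδ0 hδ1 V hVc (fun x => (hV x).1) φ hφ hper hmean hortho μ heig
  have hev : ∀ x i, 0 ≤ (hV x).1.eigenvalues i := fun x i => (hV x).eigenvalues_nonneg i
  have hpi : 0 < π := pi_pos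
  have hsp : 0 < √π := Real.sqrt_pos.2 hpi
  have hsp2 : √π * √π = π := Real.mul_self_sqrt hpi.le
  have h3 : 0 < √3 := Real.sqrt_pos.2 (by norm_num)
  rcases hγ.eq_or_lt with rfl | hγ1
  · have h1 := hkey Finset.univ 0
    simp only [sub_zero] at h1
    simp only [Real.rpow_one]
    have e1 : (1 : ℝ) + 1 / 2 = 3 / 2 := by norm_num
    have e2 : (1 : ℝ) + 3 / 2 = 5 / 2 := by norm_num
    have e3 : Real.Gamma (1 + 1) = 1 := by rw [one_add_one_eq_two, Real.Gamma_two]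
    rw [e1, e2, e3, gamma_five_half]
    have e4 : ∀ x i, max ((hV x).1.eigenvalues i) 0 = (hV x).1.eigenvalues i :=
      fun x i => max_eq_left (hev x i)
    simp_rw [e4] at h1
    refine h1.trans (le_of_eq ?_)
    congr 1
    have : 2 * √π * (3 / 4 * √π) = 3 / 2 * π := by linear_combination (3 / 2) * hsp2
    rw [this]
    field_simp
  · have h1 := lift_ineq V hVc hV μ hμ (by positivity) hγ1 hkey
    have hα : 0 < γ - 1 := by linarith
    have hb1 := ProbabilityTheory.beta_pos hα (by norm_num : (0:ℝ) < 2)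
    have hg0 := Real.Gamma_pos_of_pos hα
    have hg1 : 0 < Real.Gamma (γ + 1) := Real.Gamma_pos_of_pos (by linarith)
    have hg2 : 0 < Real.Gamma (γ + 3 / 2) := Real.Gamma_pos_of_pos (by linarith)
    have e5 : (2 * K2 δ / (3 * √3)) * ProbabilityTheory.beta (γ - 1) (5 / 2) =
        ProbabilityTheory.beta (γ - 1) 2 * ((π / Real.sqrt 3) * K2 δ *
          (Real.Gamma (γ + 1) / (2 * Real.sqrt π * Real.Gamma (γ + 3 / 2)))) := by
      rw [ProbabilityTheory.beta, ProbabilityTheory.beta, gamma_five_half, Real.Gamma_two]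
      have a1 : γ - 1 + 5 / 2 = γ + 3 / 2 := by ring
      have a2 : γ - 1 + 2 = γ + 1 := by ring
      rw [a1, a2]
      field_simp
      nlinarith
    rw [e5, mul_assoc (ProbabilityTheory.beta (γ - 1) 2)] at h1
    exact le_of_mul_le_mul_left h1 hb1
end
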